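/- arXiv:1409.6520 — 2 statements merged into one kernel-verified Lean document; each statement's English description precedes it below -/
import Mathlib

section
/- If (μ_k) is a sequence in M(ℝ;S) converging weakly* to μ ∈ M(ℝ;S), and (w_k) is a sequence of locally integrable measurable functions ℝ → ℝⁿ converging weakly* (i.e. tested against C⁰_c(ℝ;ℝⁿ)) to a locally integrable w : ℝ → ℝⁿ, then liminf_{k→∞} Φ(μ_k, w_k) ≥ Φ(μ, w). -/
open MeasureTheory Filter Topology Set Matrix
open scoped ENNReal

noncomputable section

/-- First directional derivative of a matrix-valued map. -/
def matDirDeriv {n : ℕ} (M : (Fin n → ℝ) → Matrix (Fin n) (Fin n) ℝ)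
    (z ζ : Fin n → ℝ) : Matrix (Fin n) (Fin n) ℝ :=
  Matrix.of fun i j => deriv (fun t : ℝ => M (z + t • ζ) i j) 0

/-- Second directional derivative of a matrix-valued map. -/
def matDirDeriv2 {n : ℕ} (M : (Fin n → ℝ) → Matrix (Fin n) (Fin n) ℝ)
    (z ζ ζ' : Fin n → ℝ) : Matrix (Fin n) (Fin n) ℝ :=
  Matrix.of fun i j =>
    deriv (fun s : ℝ => deriv (fun t : ℝ => M (z + t • ζ + s • ζ') i j) 0) 0

/-- Conditions (C0)-(C2) on a mobility matrix. -/
structure IsMobility {n : ℕ} (S : Set (Fin n → ℝ))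
    (M : (Fin n → ℝ) → Matrix (Fin n) (Fin n) ℝ) : Prop where
  cont : ∀ i j, ContinuousOn (fun z => M z i j) S
  smooth : ∀ i j, ContDiffOn ℝ (⊤ : ℕ∞) (fun z => M z i j) (interior S)
  symm : ∀ z ∈ interior S, (M z).IsSymm
  posDef : ∀ z ∈ interior S, (M z).PosDef
  concave : ∀ z ∈ interior S, ∀ ζ : Fin n → ℝ, (-(matDirDeriv2 M z ζ ζ)).PosSemidef

/-- Condition (C3): M(z)ν = 0 for z ∈ ∂S and ν normal to ∂S at z. -/
def MobC3 {n : ℕ} (S : Set (Fin n → ℝ)) (M : (Fin n → ℝ) → Matrix (Fin n) (Fin n) ℝ) : Prop :=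
  ∀ z ∈ frontier S, ∀ ν : Fin n → ℝ, (∀ y ∈ S, ν ⬝ᵥ (y - z) ≤ 0) → M z *ᵥ ν = 0

/-- Action density φ̃(z,p) = pᵀ M(z)⁻¹ p. -/
def actDens {n : ℕ} (M : (Fin n → ℝ) → Matrix (Fin n) (Fin n) ℝ)
    (z p : Fin n → ℝ) : ℝ := p ⬝ᵥ ((M z)⁻¹ *ᵥ p)

/-- Lower semicontinuous envelope of the action density. -/
def actDensLsc {n : ℕ} (M : (Fin n → ℝ) → Matrix (Fin n) (Fin n) ℝ)
    (S : Set (Fin n → ℝ)) (z p : Fin n → ℝ) : ℝ≥0∞ :=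
  Filter.liminf (fun q : (Fin n → ℝ) × (Fin n → ℝ) => ENNReal.ofReal (actDens M q.1 q.2))
    (𝓝 (z, p) ⊓ Filter.principal {q | q.1 ∈ interior S})

/-- Action functional Φ(μ,w) = ∫ φ(μ(x),w(x)) dx. -/
def action {n : ℕ} (M : (Fin n → ℝ) → Matrix (Fin n) (Fin n) ℝ) (S : Set (Fin n → ℝ))
    (μ w : ℝ → Fin n → ℝ) : ℝ≥0∞ :=
  ∫⁻ x : ℝ, actDensLsc M S (μ x) (w x)

/-- Membership in M(ℝ;S): measurable with values in S. -/
def MemM {n : ℕ} (S : Set (Fin n → ℝ)) (μ : ℝ → Fin n → ℝ) : Prop :=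
  Measurable μ ∧ ∀ x, μ x ∈ S

/-- Weak* convergence of a sequence, tested against continuous compactly supported functions. -/
def WeakStarTendsto {n : ℕ} (μk : ℕ → ℝ → Fin n → ℝ) (μ : ℝ → Fin n → ℝ) : Prop :=
  ∀ ρ : ℝ → Fin n → ℝ, Continuous ρ → HasCompactSupport ρ →
    Tendsto (fun k => ∫ x : ℝ, μk k x ⬝ᵥ ρ x) atTop (𝓝 (∫ x : ℝ, μ x ⬝ᵥ ρ x))

/-- Distributional solution of the continuity equation ∂ₜμ + ∂ₓw = 0 on (0,T)×ℝ. -/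
def IsDistribSol {n : ℕ} (T : ℝ) (μ w : ℝ → ℝ → Fin n → ℝ) : Prop :=
  ∀ η : ℝ × ℝ → Fin n → ℝ, ContDiff ℝ (⊤ : ℕ∞) η → HasCompactSupport η →
    tsupport η ⊆ Set.Ioo 0 T ×ˢ Set.univ →
    ∫ q : ℝ × ℝ, ((fderiv ℝ η q (1, 0)) ⬝ᵥ μ q.1 q.2 + (fderiv ℝ η q (0, 1)) ⬝ᵥ w q.1 q.2) = 0

/-- The class 𝒞_T of admissible curves. -/
structure MemCT {n : ℕ} (S : Set (Fin n → ℝ)) (T : ℝ) (μ w : ℝ → ℝ → Fin n → ℝ) : Prop where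
  memS : ∀ t ∈ Set.Icc (0:ℝ) T, ∀ x : ℝ, μ t x ∈ S
  meas : ∀ t ∈ Set.Icc (0:ℝ) T, Measurable (μ t)
  wsc : ∀ ρ : ℝ → Fin n → ℝ, Continuous ρ → HasCompactSupport ρ →
      ContinuousOn (fun t => ∫ x : ℝ, μ t x ⬝ᵥ ρ x) (Set.Icc 0 T)
  wmeas : Measurable (Function.uncurry w)
  wint : ∀ R > (0:ℝ),
      (∫⁻ t in Set.Icc (0:ℝ) T, ∫⁻ x in Set.Icc (-R) R, ENNReal.ofReal ‖w t x‖) < ⊤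
  sol : IsDistribSol T μ w

/-- Energy of a curve. -/
def energy {n : ℕ} (M : (Fin n → ℝ) → Matrix (Fin n) (Fin n) ℝ) (S : Set (Fin n → ℝ))
    (T : ℝ) (μ w : ℝ → ℝ → Fin n → ℝ) : ℝ≥0∞ :=
  ∫⁻ t in Set.Icc (0:ℝ) T, action M S (μ t) (w t)

/-- The class 𝒞_T(μ₀ → μ₁). -/
def MemCTEnds {n : ℕ} (S : Set (Fin n → ℝ)) (T : ℝ) (μ w : ℝ → ℝ → Fin n → ℝ)
    (μ₀ μ₁ : ℝ → Fin n → ℝ) : Prop :=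
  MemCT S T μ w ∧ μ 0 = μ₀ ∧ μ T = μ₁

/-- The transport distance W_M, with values in [0,∞]. -/
def WM {n : ℕ} (M : (Fin n → ℝ) → Matrix (Fin n) (Fin n) ℝ) (S : Set (Fin n → ℝ))
    (μ₀ μ₁ : ℝ → Fin n → ℝ) : ℝ≥0∞ :=
  sInf { e : ℝ≥0∞ | ∃ μ w, MemCTEnds S 1 μ w μ₀ μ₁ ∧ e = (energy M S 1 μ w) ^ (1/2 : ℝ) }

/-- Second moment ℓ₂(ν) = ∫ x² eᵀν(x) dx. -/
def mom2 {n : ℕ} (ν : ℝ → Fin n → ℝ) : ℝ≥0∞ :=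
  ∫⁻ x : ℝ, ENNReal.ofReal (x ^ 2 * ∑ j, ν x j)

/-- Hessian matrix of a scalar function on ℝⁿ. -/
def hess {n : ℕ} (h : (Fin n → ℝ) → ℝ) (z : Fin n → ℝ) : Matrix (Fin n) (Fin n) ℝ :=
  Matrix.of fun i j => fderiv ℝ (fun y => fderiv ℝ h y (Pi.single j 1)) z (Pi.single i 1)


/-- The dual form `sup_q (2 q·p - qᵀ M(z) q)` of the action density. -/
def dualDens {n : ℕ} (M : (Fin n → ℝ) → Matrix (Fin n) (Fin n) ℝ) (z p : Fin n → ℝ) : ℝ≥0∞ :=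
  ⨆ q : Fin n → ℝ, ENNReal.ofReal (2 * (q ⬝ᵥ p) - q ⬝ᵥ (M z *ᵥ q))

section Density

variable {n : ℕ} {S : Set (Fin n → ℝ)} {M : (Fin n → ℝ) → Matrix (Fin n) (Fin n) ℝ}

lemma IsMobility.continuousOn_quadForm (hM : IsMobility S M) (q : Fin n → ℝ) :
    ContinuousOn (fun z => q ⬝ᵥ (M z *ᵥ q)) S := by
  simp only [dotProduct, Matrix.mulVec]
  have := hM.cont
  fun_prop

lemma matDirDeriv2_line (z ζ : Fin n → ℝ) (s : ℝ) (i j : Fin n) :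
    matDirDeriv2 M (z + s • ζ) ζ ζ i j
      = deriv (deriv fun t : ℝ => M (z + t • ζ) i j) s := by
  set h : ℝ → ℝ := fun t => M (z + t • ζ) i j with hh
  have h1 : ∀ r : ℝ, deriv (fun t : ℝ => M (z + s • ζ + t • ζ + r • ζ) i j) 0
      = deriv h (r + s) := by
    intro r
    have : (fun t : ℝ => M (z + s • ζ + t • ζ + r • ζ) i j) = fun t => h (t + (r + s)) := by
      funext t
      simp only [hh]
      have e : z + s • ζ + t • ζ + r • ζ = z + (t + (r + s)) • ζ := by module
      rw [e]
    rw [this, deriv_comp_add_const]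
    simp
  simp only [matDirDeriv2, Matrix.of_apply, h1]
  rw [deriv_comp_add_const]
  simp

lemma IsMobility.concaveOn_quadForm_interior (hS : Convex ℝ S) (hM : IsMobility S M)
    (q : Fin n → ℝ) : ConcaveOn ℝ (interior S) (fun z => q ⬝ᵥ (M z *ᵥ q)) := by
  refine ⟨hS.interior, fun x hx y hy a b ha hb hab => ?_⟩
  set ζ : Fin n → ℝ := y - x with hζ
  set D : Set ℝ := {s | x + s • ζ ∈ interior S} with hD
  have hcont : Continuous fun s : ℝ => x + s • ζ := by fun_prop
  have hDo : IsOpen D := isOpen_interior.preimage hcont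
  have hDc : Convex ℝ D := by
    intro s hs t ht α β hα hβ hαβ
    have := hS.interior hs ht hα hβ hαβ
    have e : α • (x + s • ζ) + β • (x + t • ζ) = x + (α • s + β • t) • ζ := by
      have : x = (α + β) • x := by rw [hαβ, one_smul]
      conv_rhs => rw [this]
      simp only [smul_eq_mul]
      module
    rw [e] at this
    exact this
  let h : Fin n → Fin n → ℝ → ℝ := fun i j s => M (x + s • ζ) i j
  have hsm : ∀ i j, ContDiffOn ℝ (⊤ : ℕ∞) (h i j) D := fun i j =>
    (hM.smooth i j).comp (by fun_prop) fun s hs => hs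
  have hd1 : ∀ i j, ∀ s ∈ D, HasDerivAt (h i j) (deriv (h i j) s) s := fun i j s hs =>
    (((hsm i j).differentiableOn (by simp)).differentiableAt (hDo.mem_nhds hs)).hasDerivAt
  have hd2 : ∀ i j, ∀ s ∈ D, HasDerivAt (deriv (h i j)) (deriv (deriv (h i j)) s) s := by
    intro i j s hs
    have : ContDiffOn ℝ 1 (deriv (h i j)) D :=
      (hsm i j).deriv_of_isOpen hDo (by norm_cast)
    exact ((this.differentiableOn (by simp)).differentiableAt (hDo.mem_nhds hs)).hasDerivAt
  have key : ConcaveOn ℝ D (fun s => ∑ i, q i * ∑ j, h i j s * q j) := by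
    refine concaveOn_of_hasDerivWithinAt2_nonpos hDc
      (f' := fun s => ∑ i, q i * ∑ j, deriv (h i j) s * q j)
      (f'' := fun s => ∑ i, q i * ∑ j, deriv (deriv (h i j)) s * q j) ?_ ?_ ?_ ?_
    · have := fun i j => (hsm i j).continuousOn
      fun_prop
    · rw [hDo.interior_eq]
      intro s hs
      exact (HasDerivAt.fun_sum fun i _ => (HasDerivAt.fun_sum fun j _ =>
        (hd1 i j s hs).mul_const (q j)).const_mul (q i)).hasDerivWithinAt
    · rw [hDo.interior_eq]
      intro s hs
      exact (HasDerivAt.fun_sum fun i _ => (HasDerivAt.fun_sum fun j _ =>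
        (hd2 i j s hs).mul_const (q j)).const_mul (q i)).hasDerivWithinAt
    · rw [hDo.interior_eq]
      intro s hs
      have := (hM.concave _ hs ζ).dotProduct_mulVec_nonneg q
      simp only [Matrix.neg_mulVec, dotProduct_neg, star_trivial, Left.nonneg_neg_iff] at this
      simpa only [dotProduct, Matrix.mulVec, matDirDeriv2_line] using this
  have h0 : (0 : ℝ) ∈ D := by simpa [hD] using hx
  have h1 : (1 : ℝ) ∈ D := by simpa [hD, hζ] using hy
  have := key.2 h0 h1 ha hb hab
  have e : a • x + b • y = x + b • ζ := by
    rw [hζ]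
    have : a = 1 - b := by linarith
    subst this
    module
  simpa [h, dotProduct, Matrix.mulVec, e, hζ] using this

lemma tendsto_combo_interior (hS : Convex ℝ S) {z z₀ : Fin n → ℝ} (hz : z ∈ S)
    (hz₀ : z₀ ∈ interior S) :
    Tendsto (fun t : ℝ => (1 - t) • z + t • z₀) (𝓝[>] 0) (𝓝[interior S] z) := by
  refine tendsto_nhdsWithin_iff.2 ⟨?_, ?_⟩
  · have : Continuous fun t : ℝ => (1 - t) • z + t • z₀ := by fun_prop
    simpa using (this.tendsto 0).mono_left nhdsWithin_le_nhds
  · filter_upwards [Ioo_mem_nhdsGT (zero_lt_one' ℝ)] with t ht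
    exact hS.combo_self_interior_mem_interior hz hz₀ (by linarith [ht.2]) ht.1 (by ring)

lemma IsMobility.concaveOn_quadForm (hS : Convex ℝ S) (hSint : (interior S).Nonempty)
    (hM : IsMobility S M) (q : Fin n → ℝ) : ConcaveOn ℝ S (fun z => q ⬝ᵥ (M z *ᵥ q)) := by
  obtain ⟨z₀, hz₀⟩ := hSint
  refine ⟨hS, fun x hx y hy a b ha hb hab => ?_⟩
  have hlim : ∀ z ∈ S, Tendsto (fun t : ℝ => q ⬝ᵥ (M ((1 - t) • z + t • z₀) *ᵥ q)) (𝓝[>] 0)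
      (𝓝 (q ⬝ᵥ (M z *ᵥ q))) := fun z hz =>
    ((hM.continuousOn_quadForm q z hz).mono interior_subset).tendsto.comp
      (tendsto_combo_interior hS hz hz₀)
  refine le_of_tendsto_of_tendsto (((hlim x hx).const_smul a).add ((hlim y hy).const_smul b))
    (hlim _ (hS hx hy ha hb hab)) ?_
  filter_upwards [Ioo_mem_nhdsGT (zero_lt_one' ℝ)] with t ht
  have hmem : ∀ z ∈ S, (1 - t) • z + t • z₀ ∈ interior S := fun z hz =>
    hS.combo_self_interior_mem_interior hz hz₀ (by linarith [ht.2]) ht.1 (by ring)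
  have := (hM.concaveOn_quadForm_interior hS q).2 (hmem x hx) (hmem y hy) ha hb hab
  have e : a • ((1 - t) • x + t • z₀) + b • ((1 - t) • y + t • z₀)
      = (1 - t) • (a • x + b • y) + t • z₀ := by
    obtain rfl : a = 1 - b := by linarith
    module
  rwa [e] at this

lemma IsMobility.isUnit_det (hM : IsMobility S M) {z : Fin n → ℝ} (hz : z ∈ interior S) :
    IsUnit (M z).det :=
  (Matrix.isUnit_iff_isUnit_det _).1 (hM.posDef z hz).isUnit

lemma IsMobility.actDens_eq (hM : IsMobility S M) {z : Fin n → ℝ} (hz : z ∈ interior S)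
    (p : Fin n → ℝ) :
    actDens M z p = 2 * (((M z)⁻¹ *ᵥ p) ⬝ᵥ p) - ((M z)⁻¹ *ᵥ p) ⬝ᵥ (M z *ᵥ ((M z)⁻¹ *ᵥ p)) := by
  rw [Matrix.mulVec_mulVec, Matrix.mul_nonsing_inv _ (hM.isUnit_det hz), Matrix.one_mulVec,
    actDens, dotProduct_comm p]
  ring

lemma IsMobility.le_actDens (hM : IsMobility S M) {z : Fin n → ℝ} (hz : z ∈ interior S)
    (p q : Fin n → ℝ) : 2 * (q ⬝ᵥ p) - q ⬝ᵥ (M z *ᵥ q) ≤ actDens M z p := by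
  set r := (M z)⁻¹ *ᵥ p with hr
  have hMr : M z *ᵥ r = p := by
    rw [hr, Matrix.mulVec_mulVec, Matrix.mul_nonsing_inv _ (hM.isUnit_det hz), Matrix.one_mulVec]
  have h1 := (hM.posDef z hz).posSemidef.dotProduct_mulVec_nonneg (q - r)
  have h2 : r ⬝ᵥ (M z *ᵥ q) = q ⬝ᵥ p := by
    rw [Matrix.dotProduct_mulVec, ← Matrix.mulVec_transpose, (hM.symm z hz).eq, hMr,
      dotProduct_comm]
  have h3 : actDens M z p = r ⬝ᵥ p := by rw [actDens, dotProduct_comm]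
  simp only [star_trivial, Matrix.mulVec_sub, hMr, sub_dotProduct, dotProduct_sub, h2] at h1
  rw [h3]
  linarith

/-- `dualDens` is sequentially lower semicontinuous relative to `S`. -/
lemma IsMobility.dualDens_le_liminf {ι : Type*} {l : Filter ι} [l.NeBot] (hM : IsMobility S M)
    {f v : ι → Fin n → ℝ} {z p : Fin n → ℝ} (hfS : ∀ᶠ i in l, f i ∈ S) (hz : z ∈ S)
    (hf : Tendsto f l (𝓝 z)) (hv : Tendsto v l (𝓝 p)) :
    dualDens M z p ≤ liminf (fun i => dualDens M (f i) (v i)) l := by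
  refine iSup_le fun q => ?_
  have h1 : Tendsto (fun i => q ⬝ᵥ (M (f i) *ᵥ q)) l (𝓝 (q ⬝ᵥ (M z *ᵥ q))) :=
    (hM.continuousOn_quadForm q z hz).tendsto.comp (tendsto_nhdsWithin_iff.2 ⟨hf, hfS⟩)
  have h2 : Tendsto (fun i => q ⬝ᵥ v i) l (𝓝 (q ⬝ᵥ p)) := by
    have : Continuous fun p : Fin n → ℝ => q ⬝ᵥ p := by fun_prop
    exact (this.tendsto p).comp hv
  have h3 := ENNReal.tendsto_ofReal ((h2.const_mul 2).sub h1)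
  rw [← h3.liminf_eq]
  exact liminf_le_liminf (Eventually.of_forall fun i =>
    le_iSup (fun q => ENNReal.ofReal (2 * (q ⬝ᵥ v i) - q ⬝ᵥ (M (f i) *ᵥ q))) q)

lemma IsMobility.dualDens_eq_actDens (hM : IsMobility S M) {z : Fin n → ℝ} (hz : z ∈ interior S)
    (p : Fin n → ℝ) : dualDens M z p = ENNReal.ofReal (actDens M z p) := by
  refine le_antisymm (iSup_le fun q => ENNReal.ofReal_le_ofReal (hM.le_actDens hz p q)) ?_
  rw [hM.actDens_eq hz]
  exact le_iSup (fun q => ENNReal.ofReal (2 * (q ⬝ᵥ p) - q ⬝ᵥ (M z *ᵥ q))) _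

lemma IsMobility.dualDens_combo_le (hS : Convex ℝ S) (hM : IsMobility S M) {z z₀ : Fin n → ℝ}
    (hz : z ∈ S) (hz₀ : z₀ ∈ interior S) (p : Fin n → ℝ) {t : ℝ} (ht : t ∈ Ioo (0 : ℝ) 1) :
    dualDens M ((1 - t) • z + t • z₀) ((1 - t) • p) ≤ dualDens M z p := by
  refine iSup_le fun q => ?_
  refine le_trans ?_ (le_iSup (fun q => ENNReal.ofReal (2 * (q ⬝ᵥ p) - q ⬝ᵥ (M z *ᵥ q))) q)
  have h1 := (hM.concaveOn_quadForm hS ⟨z₀, hz₀⟩ q).2 hz (interior_subset hz₀)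
    (sub_nonneg.2 ht.2.le) ht.1.le (by ring)
  have h2 : 0 ≤ q ⬝ᵥ (M z₀ *ᵥ q) := by
    simpa using (hM.posDef z₀ hz₀).posSemidef.dotProduct_mulVec_nonneg q
  simp only [smul_eq_mul] at h1
  rw [dotProduct_smul, smul_eq_mul]
  set B := 2 * (q ⬝ᵥ p) - q ⬝ᵥ (M z *ᵥ q) with hB
  have h3 : 2 * ((1 - t) * (q ⬝ᵥ p)) - q ⬝ᵥ (M ((1 - t) • z + t • z₀) *ᵥ q) ≤ (1 - t) * B := by
    nlinarith [mul_nonneg ht.1.le h2]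
  rcases le_total 0 B with h | h
  · exact ENNReal.ofReal_le_ofReal (h3.trans (by nlinarith [ht.1]))
  · rw [ENNReal.ofReal_of_nonpos (h3.trans (by nlinarith [ht.2]))]
    exact zero_le

/-- On `S` the lower semicontinuous envelope agrees with its dual representation. -/
lemma IsMobility.actDensLsc_eq_dualDens (hS : Convex ℝ S) (hSint : (interior S).Nonempty)
    (hM : IsMobility S M) {z : Fin n → ℝ} (hz : z ∈ S) (p : Fin n → ℝ) :
    actDensLsc M S z p = dualDens M z p := by
  obtain ⟨z₀, hz₀⟩ := hSint
  have hpath : Tendsto (fun t : ℝ => ((1 - t) • z + t • z₀, (1 - t) • p)) (𝓝[>] 0)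
      (𝓝 (z, p) ⊓ 𝓟 {q | q.1 ∈ interior S}) := by
    have h1 := tendsto_nhdsWithin_iff.1 (tendsto_combo_interior hS hz hz₀)
    refine tendsto_inf.2 ⟨h1.1.prodMk_nhds ?_, tendsto_principal.2 h1.2⟩
    have : Continuous fun t : ℝ => (1 - t) • p := by fun_prop
    simpa using (this.tendsto 0).mono_left nhdsWithin_le_nhds
  have hne : (𝓝 (z, p) ⊓ 𝓟 {q : (Fin n → ℝ) × (Fin n → ℝ) | q.1 ∈ interior S}).NeBot :=
    hpath.neBot
  have hint : ∀ᶠ q in 𝓝 (z, p) ⊓ 𝓟 {q : (Fin n → ℝ) × (Fin n → ℝ) | q.1 ∈ interior S},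
      q.1 ∈ interior S := mem_inf_of_right (mem_principal_self _)
  refine le_antisymm ?_ ?_
  · refine liminf_le_of_frequently_le' (hpath.frequently (Eventually.frequently ?_))
    filter_upwards [Ioo_mem_nhdsGT (zero_lt_one' ℝ)] with t ht
    rw [← hM.dualDens_eq_actDens
      (hS.combo_self_interior_mem_interior hz hz₀ (by linarith [ht.2]) ht.1 (by ring))]
    exact hM.dualDens_combo_le hS hz hz₀ p ht
  · refine (hM.dualDens_le_liminf (f := Prod.fst) (v := Prod.snd)
      (hint.mono fun q hq => interior_subset hq) hz
      (continuous_fst.tendsto (z, p) |>.mono_left inf_le_left)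
      (continuous_snd.tendsto (z, p) |>.mono_left inf_le_left)).trans ?_
    exact liminf_le_liminf (hint.mono fun q hq => (hM.dualDens_eq_actDens hq q.2).le)

lemma IsMobility.measurable_dualDens {α : Type*} [MeasurableSpace α] (hM : IsMobility S M)
    {f v : α → Fin n → ℝ} (hf : Measurable f) (hfS : ∀ x, f x ∈ S) (hv : Measurable v) :
    Measurable fun x => dualDens M (f x) (v x) := by
  have h : LowerSemicontinuous fun y : S × (Fin n → ℝ) => dualDens M y.1 y.2 := by
    refine lowerSemicontinuous_iSup fun q => Continuous.lowerSemicontinuous ?_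
    have h1 : Continuous fun z : S => q ⬝ᵥ (M z *ᵥ q) :=
      continuousOn_iff_continuous_domRestrict.1 (hM.continuousOn_quadForm q)
    have h2 : Continuous fun y : S × (Fin n → ℝ) => q ⬝ᵥ (M y.1 *ᵥ q) := h1.comp continuous_fst
    exact ENNReal.continuous_ofReal.comp (by fun_prop)
  have hg : Measurable fun x => ((⟨f x, hfS x⟩ : S), v x) := (hf.codRestrict hfS).prodMk hv
  have hcomp := h.measurable.comp hg
  exact hcomp

lemma ofReal_integral_le_lintegral_ofReal {α : Type*} [MeasurableSpace α] {ν : Measure α}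
    {f : α → ℝ} (hf : Integrable f ν) :
    ENNReal.ofReal (∫ x, f x ∂ν) ≤ ∫⁻ x, ENNReal.ofReal (f x) ∂ν := by
  have h1 : ∫ x, f x ∂ν ≤ ∫ x, max (f x) 0 ∂ν :=
    integral_mono hf hf.pos_part fun x => le_max_left _ _
  refine (ENNReal.ofReal_le_ofReal h1).trans ?_
  rw [ofReal_integral_eq_lintegral_ofReal hf.pos_part
    (Eventually.of_forall fun x => le_max_right _ _)]
  exact lintegral_mono fun x => by simp

/-- Jensen's inequality for `dualDens`. -/
lemma IsMobility.dualDens_integral_le {α : Type*} [MeasurableSpace α] (ν : Measure α)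
    [IsProbabilityMeasure ν] (hS : Convex ℝ S) (hScomp : IsCompact S)
    (hSint : (interior S).Nonempty) (hM : IsMobility S M) {f v : α → Fin n → ℝ}
    (hf : Measurable f) (hfS : ∀ x, f x ∈ S) (hfi : Integrable f ν) (hv : Integrable v ν) :
    dualDens M (∫ x, f x ∂ν) (∫ x, v x ∂ν) ≤ ∫⁻ x, dualDens M (f x) (v x) ∂ν := by
  refine iSup_le fun q => ?_
  set g : (Fin n → ℝ) → ℝ := fun z => q ⬝ᵥ (M z *ᵥ q) with hg
  have hgc : ContinuousOn g S := hM.continuousOn_quadForm q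
  have hgm : Measurable (g ∘ f) := by
    have hcomp :=
      (continuousOn_iff_continuous_domRestrict.1 hgc).measurable.comp (hf.codRestrict hfS)
    exact hcomp
  obtain ⟨C, hC⟩ := (hScomp.image_of_continuousOn hgc).isBounded.exists_norm_le
  have hgi : Integrable (g ∘ f) ν := Integrable.of_bound hgm.aestronglyMeasurable C
    (Eventually.of_forall fun x => hC _ (mem_image_of_mem g (hfS x)))
  have h1 : ∫ x, g (f x) ∂ν ≤ g (∫ x, f x ∂ν) :=
    (hM.concaveOn_quadForm hS hSint q).le_map_integral hgc hScomp.isClosed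
      (Eventually.of_forall hfS) hfi hgi
  let L : (Fin n → ℝ) →L[ℝ] ℝ := LinearMap.toContinuousLinearMap (dotProductBilin ℝ ℝ q)
  have h2 : ∫ x, q ⬝ᵥ v x ∂ν = q ⬝ᵥ ∫ x, v x ∂ν := L.integral_comp_comm hv
  have hqv : Integrable (fun x => q ⬝ᵥ v x) ν := L.integrable_comp hv
  have h3 : ∫ x, (2 * (q ⬝ᵥ v x) - g (f x)) ∂ν
      = 2 * (q ⬝ᵥ ∫ x, v x ∂ν) - ∫ x, g (f x) ∂ν := by
    have hgi' : Integrable (fun x => g (f x)) ν := hgi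
    rw [integral_sub (hqv.const_mul 2) hgi', integral_const_mul, h2]
  calc ENNReal.ofReal (2 * (q ⬝ᵥ ∫ x, v x ∂ν) - g (∫ x, f x ∂ν))
      ≤ ENNReal.ofReal (∫ x, (2 * (q ⬝ᵥ v x) - g (f x)) ∂ν) :=
        ENNReal.ofReal_le_ofReal (by linarith)
    _ ≤ ∫⁻ x, ENNReal.ofReal (2 * (q ⬝ᵥ v x) - g (f x)) ∂ν :=
        ofReal_integral_le_lintegral_ofReal ((hqv.const_mul 2).sub hgi)
    _ ≤ _ := lintegral_mono fun x =>
        le_iSup (fun q => ENNReal.ofReal (2 * (q ⬝ᵥ v x) - q ⬝ᵥ (M (f x) *ᵥ q))) q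

end Density

section Mollification

open ContinuousLinearMap
open scoped Convolution

variable {n : ℕ}

/-- The convolution of a vector field on `ℝ` with a normalized bump function. -/
def mollify (η : ContDiffBump (0 : ℝ)) (f : ℝ → Fin n → ℝ) : ℝ → Fin n → ℝ :=
  η.normed volume ⋆[lsmul ℝ ℝ, volume] f

/-- The probability measure whose density is a normalized bump function. -/
def bumpMeasure (η : ContDiffBump (0 : ℝ)) : Measure ℝ :=
  volume.withDensity fun t => ENNReal.ofReal (η.normed volume t)

lemma measurable_ofReal_normed (η : ContDiffBump (0 : ℝ)) :
    Measurable fun t => ENNReal.ofReal (η.normed volume t) :=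
  ENNReal.measurable_ofReal.comp η.continuous_normed.measurable

instance isProbabilityMeasure_bumpMeasure (η : ContDiffBump (0 : ℝ)) :
    IsProbabilityMeasure (bumpMeasure η) := by
  refine ⟨?_⟩
  rw [bumpMeasure, withDensity_apply _ MeasurableSet.univ, Measure.restrict_univ,
    ← ofReal_integral_eq_lintegral_ofReal η.integrable_normed
      (Eventually.of_forall η.nonneg_normed), η.integral_normed, ENNReal.ofReal_one]

lemma mollify_eq_integral (η : ContDiffBump (0 : ℝ)) (f : ℝ → Fin n → ℝ) (x : ℝ) :
    mollify η f x = ∫ t, f (x - t) ∂(bumpMeasure η) := by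
  rw [bumpMeasure, integral_withDensity_eq_integral_toReal_smul (measurable_ofReal_normed η)
    (Eventually.of_forall fun _ => ENNReal.ofReal_lt_top)]
  simp only [ENNReal.toReal_ofReal (η.nonneg_normed _)]
  rfl

lemma integrable_bumpMeasure (η : ContDiffBump (0 : ℝ)) {f : ℝ → Fin n → ℝ}
    (hf : LocallyIntegrable f volume) (x : ℝ) :
    Integrable (fun t => f (x - t)) (bumpMeasure η) := by
  rw [bumpMeasure, integrable_withDensity_iff_integrable_smul' (measurable_ofReal_normed η)
    (Eventually.of_forall fun _ => ENNReal.ofReal_lt_top)]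
  simp only [ENNReal.toReal_ofReal (η.nonneg_normed _)]
  exact η.hasCompactSupport_normed.convolutionExists_left (lsmul ℝ ℝ) η.continuous_normed hf x

lemma continuous_mollify (η : ContDiffBump (0 : ℝ)) {f : ℝ → Fin n → ℝ}
    (hf : LocallyIntegrable f volume) : Continuous (mollify η f) :=
  η.hasCompactSupport_normed.continuous_convolution_left (lsmul ℝ ℝ) η.continuous_normed hf

lemma mollify_mem {S : Set (Fin n → ℝ)} (hS : Convex ℝ S) (hScl : IsClosed S)
    (η : ContDiffBump (0 : ℝ)) {f : ℝ → Fin n → ℝ} (hf : LocallyIntegrable f volume)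
    (hfS : ∀ x, f x ∈ S) (x : ℝ) : mollify η f x ∈ S := by
  rw [mollify_eq_integral]
  exact hS.integral_mem hScl (Eventually.of_forall fun t => hfS _) (integrable_bumpMeasure η hf x)

/-- Mollification does not increase the dual action. -/
lemma IsMobility.lintegral_dualDens_mollify_le {S : Set (Fin n → ℝ)}
    {M : (Fin n → ℝ) → Matrix (Fin n) (Fin n) ℝ} (hS : Convex ℝ S) (hScomp : IsCompact S)
    (hSint : (interior S).Nonempty) (hM : IsMobility S M) (η : ContDiffBump (0 : ℝ))
    {f v : ℝ → Fin n → ℝ} (hf : Measurable f) (hfS : ∀ x, f x ∈ S)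
    (hfl : LocallyIntegrable f volume) (hv : Measurable v) (hvl : LocallyIntegrable v volume) :
    ∫⁻ x, dualDens M (mollify η f x) (mollify η v x) ≤ ∫⁻ x, dualDens M (f x) (v x) := by
  have hmeas := hM.measurable_dualDens hf hfS hv
  calc ∫⁻ x, dualDens M (mollify η f x) (mollify η v x)
      ≤ ∫⁻ x, ∫⁻ t, dualDens M (f (x - t)) (v (x - t)) ∂(bumpMeasure η) := by
        refine lintegral_mono fun x => ?_
        simp only [mollify_eq_integral]
        exact hM.dualDens_integral_le _ hS hScomp hSint
          (hf.comp (measurable_const.sub measurable_id)) (fun t => hfS _) (integrable_bumpMeasure η hfl x) (integrable_bumpMeasure η hvl x)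
    _ = ∫⁻ t, (∫⁻ x, dualDens M (f (x - t)) (v (x - t))) ∂(bumpMeasure η) :=
        lintegral_lintegral_swap (f := fun x t => dualDens M (f (x - t)) (v (x - t)))
          (hmeas.comp (measurable_fst.sub measurable_snd)).aemeasurable
    _ = ∫⁻ x, dualDens M (f x) (v x) := by
        have h : ∀ t, ∫⁻ x, dualDens M (f (x - t)) (v (x - t)) = ∫⁻ x, dualDens M (f x) (v x) :=
          lintegral_sub_right_eq_self fun x => dualDens M (f x) (v x)
        simp only [h, lintegral_const, measure_univ, mul_one]

lemma mollify_apply (η : ContDiffBump (0 : ℝ)) {f : ℝ → Fin n → ℝ}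
    (hf : LocallyIntegrable f volume) (x : ℝ) (i : Fin n) :
    mollify η f x i = ∫ t, f t ⬝ᵥ Pi.single i (η.normed volume (x - t)) := by
  have h := (η.hasCompactSupport_normed (μ := volume)).convolutionExists_left (lsmul ℝ ℝ)
    η.continuous_normed hf x
  have e : mollify η f x = ∫ t, η.normed volume (x - t) • f t := convolution_lsmul_swap
  have hi : Integrable (fun t => η.normed volume (x - t) • f t) := by
    simpa using h.integrable_swap
  rw [e, eval_integral (fun j => hi.eval j)]
  simp [dotProduct_single, mul_comm]

lemma WeakStarTendsto.tendsto_mollify {fk : ℕ → ℝ → Fin n → ℝ} {f : ℝ → Fin n → ℝ}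
    (h : WeakStarTendsto fk f) (hfk : ∀ k, LocallyIntegrable (fk k) volume)
    (hf : LocallyIntegrable f volume) (η : ContDiffBump (0 : ℝ)) (x : ℝ) :
    Tendsto (fun k => mollify η (fk k) x) atTop (𝓝 (mollify η f x)) := by
  refine tendsto_pi_nhds.2 fun i => ?_
  simp only [mollify_apply η (hfk _), mollify_apply η hf]
  refine h _ ?_ ?_
  · exact (continuous_single i).comp (η.continuous_normed.comp (by fun_prop))
  · have h1 : HasCompactSupport fun t => η.normed volume (x - t) :=
      η.hasCompactSupport_normed.comp_homeomorph (Homeomorph.subLeft x)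
    exact h1.comp_left (g := Pi.single i) (Pi.single_zero i)

lemma MemM.locallyIntegrable {S : Set (Fin n → ℝ)} (hS : IsCompact S) {f : ℝ → Fin n → ℝ}
    (hf : MemM S f) : LocallyIntegrable f volume := by
  obtain ⟨C, hC⟩ := hS.isBounded.exists_norm_le
  exact (memLp_top_of_bound hf.1.aestronglyMeasurable C
    (Eventually.of_forall fun x => hC _ (hf.2 x))).locallyIntegrable le_top

/-- A sequence of bump functions shrinking to the origin. -/
def shrinkingBump (m : ℕ) : ContDiffBump (0 : ℝ) where
  rIn := 1 / ((m : ℝ) + 1)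
  rOut := 2 * (1 / ((m : ℝ) + 1))
  rIn_pos := by positivity
  rIn_lt_rOut := by
    have : 0 < 1 / ((m : ℝ) + 1) := by positivity
    linarith

lemma ae_tendsto_mollify_shrinkingBump {f : ℝ → Fin n → ℝ} (hf : LocallyIntegrable f volume) :
    ∀ᵐ x, Tendsto (fun m => mollify (shrinkingBump m) f x) atTop (𝓝 (f x)) := by
  refine ContDiffBump.ae_convolution_tendsto_right_of_locallyIntegrable (K := 2) ?_ ?_ hf
  · simpa [shrinkingBump] using (tendsto_one_div_add_atTop_nhds_zero_nat (𝕜 := ℝ)).const_mul 2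
  · exact Eventually.of_forall fun m => le_rfl

lemma IsMobility.action_eq {S : Set (Fin n → ℝ)} {M : (Fin n → ℝ) → Matrix (Fin n) (Fin n) ℝ}
    (hS : Convex ℝ S) (hSint : (interior S).Nonempty) (hM : IsMobility S M)
    {f v : ℝ → Fin n → ℝ} (hfS : ∀ x, f x ∈ S) :
    action M S f v = ∫⁻ x, dualDens M (f x) (v x) :=
  lintegral_congr fun x => hM.actDensLsc_eq_dualDens hS hSint (hfS x) (v x)

end Mollification

/-- lower semicontinuity of the action functional under weak* convergence. -/
theorem action_lsc_weakstar {n : ℕ} (hn : 1 ≤ n)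
    (S : Set (Fin n → ℝ)) (hSconv : Convex ℝ S) (hScomp : IsCompact S)
    (hSint : (interior S).Nonempty)
    (M : (Fin n → ℝ) → Matrix (Fin n) (Fin n) ℝ) (hM : IsMobility S M)
    (μk : ℕ → ℝ → Fin n → ℝ) (μ : ℝ → Fin n → ℝ)
    (hμk : ∀ k, MemM S (μk k)) (hμ : MemM S μ)
    (wk : ℕ → ℝ → Fin n → ℝ) (w : ℝ → Fin n → ℝ)
    (hwkmeas : ∀ k, Measurable (wk k))
    (hwkloc : ∀ k, LocallyIntegrable (wk k) (volume : Measure ℝ))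
    (hwmeas : Measurable w) (hwloc : LocallyIntegrable w (volume : Measure ℝ))
    (hμconv : WeakStarTendsto μk μ)
    (hwconv : ∀ ρ : ℝ → Fin n → ℝ, Continuous ρ → HasCompactSupport ρ →
      Tendsto (fun k => ∫ x : ℝ, wk k x ⬝ᵥ ρ x) atTop (𝓝 (∫ x : ℝ, w x ⬝ᵥ ρ x))) :
    action M S μ w ≤ Filter.liminf (fun k => action M S (μk k) (wk k)) atTop := by
  have hμl := hμ.locallyIntegrable hScomp
  have hμkl := fun k => (hμk k).locallyIntegrable hScomp
  have hwconv' : WeakStarTendsto wk w := hwconv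
  simp only [hM.action_eq hSconv hSint hμ.2, hM.action_eq hSconv hSint (hμk _).2]
  have hmem := fun η => mollify_mem hSconv hScomp.isClosed η hμl hμ.2
  have hmemk := fun η k => mollify_mem hSconv hScomp.isClosed η (hμkl k) (hμk k).2
  have hmoll : ∀ η : ContDiffBump (0 : ℝ), ∫⁻ x, dualDens M (mollify η μ x) (mollify η w x)
      ≤ liminf (fun k => ∫⁻ x, dualDens M (μk k x) (wk k x)) atTop := fun η =>
    calc ∫⁻ x, dualDens M (mollify η μ x) (mollify η w x)
        ≤ ∫⁻ x, liminf (fun k => dualDens M (mollify η (μk k) x) (mollify η (wk k) x)) atTop :=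
          lintegral_mono fun x => hM.dualDens_le_liminf
            (Eventually.of_forall fun k => hmemk η k x) (hmem η x)
            (hμconv.tendsto_mollify hμkl hμl η x) (hwconv'.tendsto_mollify hwkloc hwloc η x)
      _ ≤ liminf (fun k => ∫⁻ x, dualDens M (mollify η (μk k) x) (mollify η (wk k) x)) atTop :=
          lintegral_liminf_le fun k => hM.measurable_dualDens
            (continuous_mollify η (hμkl k)).measurable (hmemk η k)
            (continuous_mollify η (hwkloc k)).measurable
      _ ≤ _ := liminf_le_liminf (Eventually.of_forall fun k =>
          hM.lintegral_dualDens_mollify_le hSconv hScomp hSint η (hμk k).1 (hμk k).2 (hμkl k)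
            (hwkmeas k) (hwkloc k))
  calc ∫⁻ x, dualDens M (μ x) (w x)
      ≤ ∫⁻ x, liminf (fun m => dualDens M (mollify (shrinkingBump m) μ x)
          (mollify (shrinkingBump m) w x)) atTop := by
        refine lintegral_mono_ae ?_
        filter_upwards [ae_tendsto_mollify_shrinkingBump hμl,
          ae_tendsto_mollify_shrinkingBump hwloc] with x hx hx'
        exact hM.dualDens_le_liminf (Eventually.of_forall fun m => hmem _ x) (hμ.2 x) hx hx'
    _ ≤ liminf (fun m => ∫⁻ x, dualDens M (mollify (shrinkingBump m) μ x)
          (mollify (shrinkingBump m) w x)) atTop :=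
        lintegral_liminf_le fun m => hM.measurable_dualDens
          (continuous_mollify _ hμl).measurable (hmem _) (continuous_mollify _ hwloc).measurable
    _ ≤ _ := liminf_le_of_frequently_le' (Frequently.of_forall fun m => hmoll _)

end
end

section
/- For ε > 0 define h_ε : (0,1)² → ℝ by h_ε(z) = z₁ log z₁ + (1−z₁) log(1−z₁) + z₂ log z₂ + (1−z₂) log(1−z₂) + ε z₁ z₂ (1−z₁)(1−z₂). There exists ε₀ > 0 such that for every ε ∈ (0, ε₀]: (i) the Hessian ∇²h_ε(z) is positive definite (in particular det ∇²h_ε(z) > 0) for every z ∈ (0,1)²; (ii) M_ε(z) := (∇²h_ε(z))⁻¹ extends continuously to S = [0,1]² by setting M_ε(z) = diag(z₁(1−z₁), z₂(1−z₂)) for z ∈ ∂S; (iii) M_ε satisfies the strengthened concavity condition (C2'): for every z ∈ (0,1)² and all ζ, β ∈ ℝ²\{0}, βᵀ D²M_ε(z)[ζ,ζ] β < 0. In particular M_ε satisfies conditions (C0)–(C3) and (C2'). -/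
open MeasureTheory Filter Topology Set Matrix
open scoped ENNReal

noncomputable section

/-- Scalar logistic entropy s ↦ s log s + (1−s) log(1−s). -/
def logEntropy (s : ℝ) : ℝ := s * Real.log s + (1 - s) * Real.log (1 - s)

/-- The perturbed entropy h_ε on (0,1)². -/
def hPert (ε : ℝ) (z : Fin 2 → ℝ) : ℝ :=
  logEntropy (z 0) + logEntropy (z 1) + ε * (z 0 * z 1 * (1 - z 0) * (1 - z 1))

/-- `HasJet f a b c` says that `f` is `C²` at `0` with value `a`, first derivative `b` and second
derivative `c` there. -/
structure HasJet (f : ℝ → ℝ) (a b c : ℝ) : Prop where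
  contDiffAt : ContDiffAt ℝ 2 f 0
  value : f 0 = a
  deriv_eq : deriv f 0 = b
  deriv2_eq : deriv (deriv f) 0 = c

lemma ContDiffAt.differentiableAt_deriv_of_two {f : ℝ → ℝ} {x : ℝ} (hf : ContDiffAt ℝ 2 f x) :
    DifferentiableAt ℝ (deriv f) x :=
  ((hf.fderiv_right (m := 1) (by norm_num)).differentiableAt (by norm_num)).clm_apply
    (differentiableAt_const (1 : ℝ))

lemma ContDiffAt.eventually_differentiableAt_of_two {f : ℝ → ℝ} {x : ℝ}
    (hf : ContDiffAt ℝ 2 f x) : ∀ᶠ y in 𝓝 x, DifferentiableAt ℝ f y :=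
  (hf.eventually (by simp)).mono fun _ hy => hy.differentiableAt (by norm_num)

namespace HasJet

variable {f g : ℝ → ℝ} {a b c a' b' c' : ℝ}

lemma const (k : ℝ) : HasJet (fun _ => k) k 0 0 :=
  ⟨contDiffAt_const, rfl, by simp, by simp⟩

lemma affine (x v : ℝ) : HasJet (fun t => x + t * v) x v 0 := by
  have h : deriv (fun t : ℝ => x + t * v) = fun _ => v := by
    funext t
    simp
  exact ⟨by fun_prop, by simp, by rw [h], by rw [h]; simp⟩

lemma add (hf : HasJet f a b c) (hg : HasJet g a' b' c') :
    HasJet (fun t => f t + g t) (a + a') (b + b') (c + c') := by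
  have hev : deriv (fun t => f t + g t) =ᶠ[𝓝 0] fun t => deriv f t + deriv g t := by
    filter_upwards [hf.contDiffAt.eventually_differentiableAt_of_two,
      hg.contDiffAt.eventually_differentiableAt_of_two] with t h1 h2
    exact deriv_fun_add h1 h2
  refine ⟨hf.contDiffAt.add hg.contDiffAt, by rw [hf.value, hg.value], ?_, ?_⟩
  · rw [hev.eq_of_nhds, hf.deriv_eq, hg.deriv_eq]
  · rw [hev.deriv_eq, deriv_fun_add hf.contDiffAt.differentiableAt_deriv_of_two
      hg.contDiffAt.differentiableAt_deriv_of_two, hf.deriv2_eq, hg.deriv2_eq]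

lemma mul (hf : HasJet f a b c) (hg : HasJet g a' b' c') :
    HasJet (fun t => f t * g t) (a * a') (b * a' + a * b') (c * a' + 2 * b * b' + a * c') := by
  have hev : deriv (fun t => f t * g t) =ᶠ[𝓝 0] fun t => deriv f t * g t + f t * deriv g t := by
    filter_upwards [hf.contDiffAt.eventually_differentiableAt_of_two,
      hg.contDiffAt.eventually_differentiableAt_of_two] with t h1 h2
    exact deriv_fun_mul h1 h2
  have hf1 := hf.contDiffAt.eventually_differentiableAt_of_two.self_of_nhds
  have hg1 := hg.contDiffAt.eventually_differentiableAt_of_two.self_of_nhds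
  have hf2 := hf.contDiffAt.differentiableAt_deriv_of_two
  have hg2 := hg.contDiffAt.differentiableAt_deriv_of_two
  refine ⟨hf.contDiffAt.mul hg.contDiffAt, by rw [hf.value, hg.value], ?_, ?_⟩
  · rw [hev.eq_of_nhds, hf.deriv_eq, hg.deriv_eq, hf.value, hg.value]
  · rw [hev.deriv_eq, deriv_fun_add (hf2.fun_mul hg1) (hf1.fun_mul hg2), deriv_fun_mul hf2 hg1,
      deriv_fun_mul hf1 hg2, hf.deriv_eq, hg.deriv_eq, hf.deriv2_eq, hg.deriv2_eq, hf.value,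
      hg.value]
    ring

lemma congr (hf : HasJet f a b c) (hfg : ∀ t, g t = f t) (ha : a' = a) (hb : b' = b)
    (hc : c' = c) : HasJet g a' b' c' := by
  obtain rfl : g = f := funext hfg
  subst ha hb hc
  exact hf

lemma logistic (x v : ℝ) :
    HasJet (fun t => (x + t * v) * (1 - (x + t * v))) (x * (1 - x)) ((1 - 2 * x) * v)
      (-2 * v ^ 2) :=
  ((affine x v).mul (affine (1 - x) (-v))).congr (fun t => by ring) (by ring) (by ring) (by ring)

lemma of_comp_line {E : Type*} [NormedAddCommGroup E] [NormedSpace ℝ E] {G : E → ℝ} {w : E}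
    (hG : ContDiffAt ℝ 2 G w) (v : E) :
    HasJet (fun t : ℝ => G (w + t • v)) (G w) (fderiv ℝ G w v) (fderiv ℝ (fderiv ℝ G) w v v) := by
  have hline : ∀ t : ℝ, HasDerivAt (fun t : ℝ => w + t • v) v t := fun t => by
    simpa using ((hasDerivAt_id t).smul_const v).const_add w
  have htend : Tendsto (fun t : ℝ => w + t • v) (𝓝 0) (𝓝 w) := by
    simpa using (hline 0).continuousAt.tendsto
  have hw : w + (0 : ℝ) • v = w := by simp
  have hev : deriv (fun t : ℝ => G (w + t • v)) =ᶠ[𝓝 0] fun t => fderiv ℝ G (w + t • v) v := by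
    filter_upwards [htend.eventually (hG.eventually (by simp))] with t ht
    exact ((ht.differentiableAt (by norm_num)).hasFDerivAt.comp_hasDerivAt t (hline t)).deriv
  have hG' : DifferentiableAt ℝ (fderiv ℝ G) (w + (0 : ℝ) • v) := by
    rw [hw]
    exact (hG.fderiv_right (m := 1) (by norm_num)).differentiableAt (by norm_num)
  refine ⟨?_, by simp, ?_, ?_⟩
  · refine ContDiffAt.comp (0 : ℝ) (by rwa [hw]) ?_
    fun_prop
  · rw [hev.eq_of_nhds, hw]
  · have h2 : HasDerivAt (fun t : ℝ => fderiv ℝ G (w + t • v))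
        (fderiv ℝ (fderiv ℝ G) (w + (0 : ℝ) • v) v) 0 :=
      HasFDerivAt.comp_hasDerivAt (f := fun t : ℝ => w + t • v) 0 hG'.hasFDerivAt (hline 0)
    rw [hw] at h2
    rw [hev.deriv_eq]
    exact (((ContinuousLinearMap.apply ℝ ℝ v).hasFDerivAt).comp_hasDerivAt 0 h2).deriv

end HasJet

lemma matDirDeriv2_eq_of_hasJet {n : ℕ} {M : (Fin n → ℝ) → Matrix (Fin n) (Fin n) ℝ}
    {z ζ : Fin n → ℝ} {i j : Fin n} {a b c : ℝ} (h : HasJet (fun t => M (z + t • ζ) i j) a b c) :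
    matDirDeriv2 M z ζ ζ i j = c := by
  have : ∀ s : ℝ, deriv (fun t : ℝ => M (z + t • ζ + s • ζ) i j) 0 =
      deriv (fun t : ℝ => M (z + t • ζ) i j) s := by
    intro s
    have h1 := deriv_comp_const_add (fun t : ℝ => M (z + t • ζ) i j) s 0
    rw [add_zero] at h1
    rw [← h1]
    congr 1
    funext t
    rw [add_smul, add_assoc, add_comm (s • ζ)]
  simp only [matDirDeriv2, Matrix.of_apply, this]
  exact h.deriv2_eq

/-- On a compact set of parameters `(ε, x, y)`, the jets of a `C²` function along lines in the
variables `(x, y)` have uniformly bounded coefficients. -/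
lemma exists_jet_bound {G : ℝ × ℝ × ℝ → ℝ} {K : Set (ℝ × ℝ × ℝ)} (hK : IsCompact K)
    (hG : ∀ w ∈ K, ContDiffAt ℝ 2 G w) :
    ∃ C : ℝ, ∀ w ∈ K, ∃ g₁ g₂ g₁₁ g₁₂ g₂₂ : ℝ, |G w| ≤ C ∧ |g₁| ≤ C ∧ |g₂| ≤ C ∧
      |g₁₁| ≤ C ∧ |g₁₂| ≤ C ∧ |g₂₂| ≤ C ∧ ∀ v₁ v₂ : ℝ,
        HasJet (fun t => G (w.1, w.2.1 + t * v₁, w.2.2 + t * v₂)) (G w) (g₁ * v₁ + g₂ * v₂)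
          (g₁₁ * v₁ ^ 2 + 2 * g₁₂ * v₁ * v₂ + g₂₂ * v₂ ^ 2) := by
  have hG1 : ∀ w ∈ K, ContDiffAt ℝ 1 (fderiv ℝ G) w := fun w hw =>
    (hG w hw).fderiv_right (by norm_num)
  have hG2 : ∀ w ∈ K, ContDiffAt ℝ 0 (fderiv ℝ (fderiv ℝ G)) w := fun w hw =>
    (hG1 w hw).fderiv_right (by norm_num)
  obtain ⟨C₀, h₀⟩ := hK.exists_bound_of_continuousOn
    (fun w hw => (hG w hw).continuousAt.continuousWithinAt)
  obtain ⟨C₁, h₁⟩ := hK.exists_bound_of_continuousOn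
    (fun w hw => (hG1 w hw).continuousAt.continuousWithinAt)
  obtain ⟨C₂, h₂⟩ := hK.exists_bound_of_continuousOn (f := fderiv ℝ (fderiv ℝ G))
    (fun w hw => (hG2 w hw).continuousAt.continuousWithinAt)
  refine ⟨max C₀ (max C₁ C₂), fun w hw => ?_⟩
  set e₁ : ℝ × ℝ × ℝ := (0, 1, 0)
  set e₂ : ℝ × ℝ × ℝ := (0, 0, 1)
  have he₁ : ‖e₁‖ ≤ 1 := by simp [e₁, Prod.norm_def]
  have he₂ : ‖e₂‖ ≤ 1 := by simp [e₂, Prod.norm_def]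
  have b1 : ∀ e : ℝ × ℝ × ℝ, ‖e‖ ≤ 1 → |fderiv ℝ G w e| ≤ max C₀ (max C₁ C₂) := fun e he =>
    ((fderiv ℝ G w).le_of_opNorm_le_of_le (h₁ w hw) he).trans (by simp)
  have b2 : ∀ e e' : ℝ × ℝ × ℝ, ‖e‖ ≤ 1 → ‖e'‖ ≤ 1 →
      |fderiv ℝ (fderiv ℝ G) w e e'| ≤ max C₀ (max C₁ C₂) := fun e e' he he' => by
    have h3 := (fderiv ℝ (fderiv ℝ G) w).le_of_opNorm_le_of_le (h₂ w hw) he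
    exact ((fderiv ℝ (fderiv ℝ G) w e).le_of_opNorm_le_of_le h3 he').trans (by simp)
  refine ⟨fderiv ℝ G w e₁, fderiv ℝ G w e₂, fderiv ℝ (fderiv ℝ G) w e₁ e₁,
    (fderiv ℝ (fderiv ℝ G) w e₁ e₂ + fderiv ℝ (fderiv ℝ G) w e₂ e₁) / 2,
    fderiv ℝ (fderiv ℝ G) w e₂ e₂, (h₀ w hw).trans (le_max_left _ _), b1 _ he₁, b1 _ he₂,
    b2 _ _ he₁ he₁, ?_, b2 _ _ he₂ he₂, fun v₁ v₂ => ?_⟩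
  · have h12 := abs_le.1 (b2 _ _ he₁ he₂)
    have h21 := abs_le.1 (b2 _ _ he₂ he₁)
    exact abs_le.2 ⟨by linarith, by linarith⟩
  · have hv : ((0 : ℝ), v₁, v₂) = v₁ • e₁ + v₂ • e₂ := by simp [e₁, e₂]
    refine (HasJet.of_comp_line (hG w hw) ((0 : ℝ), v₁, v₂)).congr (fun t => ?_) rfl ?_ ?_
    · congr 1
      ext <;> simp
    · rw [hv]
      simp only [map_add, map_smul, smul_eq_mul]
      ring
    · rw [hv]
      simp only [map_add, map_smul, smul_eq_mul, _root_.add_apply, _root_.smul_apply]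
      ring

/-- The quadratic form inequality: for small `ε` the diagonal terms absorb the mixed ones. -/
lemma quadForm_neg_of_small {K ε X Y U V c₁ c₂ c₃ c₄ c₅ c₆ c₇ c₈ c₉ : ℝ} (hε : 0 < ε)
    (hεK : ε * (1 + 2 * K + K ^ 2) ≤ 1) (h₁ : |c₁| ≤ K) (h₂ : |c₂| ≤ K) (h₃ : |c₃| ≤ K)
    (h₄ : |c₄| ≤ K) (h₅ : |c₅| ≤ K) (h₆ : |c₆| ≤ K) (h₇ : |c₇| ≤ K) (h₈ : |c₈| ≤ K)
    (h₉ : |c₉| ≤ K) (hne : ¬ (X = 0 ∧ Y = 0 ∧ U = 0 ∧ V = 0)) :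
    (-2 * X ^ 2 - 4 * ε * U ^ 2 + ε * (c₁ * X ^ 2 + c₂ * (X * U) + ε * (c₃ * U ^ 2))) +
      (-2 * Y ^ 2 - 4 * ε * V ^ 2 + ε * (c₄ * Y ^ 2 + c₅ * (Y * V) + ε * (c₆ * V ^ 2))) +
      ε * (c₇ * (X * V) + c₈ * (X * Y) + c₉ * (U * Y)) < 0 := by
  have hK : 0 ≤ K := (abs_nonneg _).trans h₁
  have sq : ∀ c x : ℝ, |c| ≤ K → c * x ^ 2 ≤ K * x ^ 2 := fun c x hc =>
    mul_le_mul_of_nonneg_right ((le_abs_self c).trans hc) (sq_nonneg x)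
  have mix : ∀ c x u : ℝ, |c| ≤ K → c * (x * u) ≤ u ^ 2 + K ^ 2 / 4 * x ^ 2 := fun c x u hc => by
    have hc2 : c ^ 2 ≤ K ^ 2 := sq_le_sq' (abs_le.1 hc).1 (abs_le.1 hc).2
    nlinarith [sq_nonneg (u - c / 2 * x), mul_le_mul_of_nonneg_right hc2 (sq_nonneg x)]
  have hεK1 : ε * K ≤ 1 := by nlinarith [mul_nonneg hε.le hK, mul_nonneg hε.le (sq_nonneg K)]
  have a1 := sq c₁ X h₁
  have a2 := mix c₂ X U h₂
  have a3 : ε * (c₃ * U ^ 2) ≤ U ^ 2 := by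
    nlinarith [mul_le_mul_of_nonneg_left (sq c₃ U h₃) hε.le,
      mul_le_mul_of_nonneg_right hεK1 (sq_nonneg U)]
  have a4 := sq c₄ Y h₄
  have a5 := mix c₅ Y V h₅
  have a6 : ε * (c₆ * V ^ 2) ≤ V ^ 2 := by
    nlinarith [mul_le_mul_of_nonneg_left (sq c₆ V h₆) hε.le,
      mul_le_mul_of_nonneg_right hεK1 (sq_nonneg V)]
  have a7 := mix c₇ X V h₇
  have a8 : c₈ * (X * Y) ≤ K / 2 * (X ^ 2 + Y ^ 2) := by
    have h8 := abs_le.1 h₈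
    nlinarith [mul_nonneg (sub_nonneg.2 h8.2) (sq_nonneg (X + Y)),
      mul_nonneg (by linarith [h8.1] : 0 ≤ K + c₈) (sq_nonneg (X - Y))]
  have a9 := mix c₉ Y U h₉
  have total : c₁ * X ^ 2 + c₂ * (X * U) + ε * (c₃ * U ^ 2) +
      (c₄ * Y ^ 2 + c₅ * (Y * V) + ε * (c₆ * V ^ 2)) +
      (c₇ * (X * V) + c₈ * (X * Y) + c₉ * (U * Y)) ≤
      3 * U ^ 2 + 3 * V ^ 2 + (1 + 2 * K + K ^ 2) * (X ^ 2 + Y ^ 2) := by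
    have k1 := mul_nonneg hK (sq_nonneg X)
    have k2 := mul_nonneg hK (sq_nonneg Y)
    have k3 := mul_nonneg (sq_nonneg K) (sq_nonneg X)
    have k4 := mul_nonneg (sq_nonneg K) (sq_nonneg Y)
    linarith [sq_nonneg X, sq_nonneg Y]
  have pos : 0 < X ^ 2 + Y ^ 2 + ε * (U ^ 2 + V ^ 2) := by
    by_contra hcon
    have hU := mul_nonneg hε.le (sq_nonneg U)
    have hV := mul_nonneg hε.le (sq_nonneg V)
    have hX := sq_nonneg X
    have hY := sq_nonneg Y
    have key : X ^ 2 = 0 ∧ Y ^ 2 = 0 ∧ ε * U ^ 2 = 0 ∧ ε * V ^ 2 = 0 :=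
      ⟨by linarith, by linarith, by linarith, by linarith⟩
    exact hne (by simpa [hε.ne'] using key)
  have t1 := mul_le_mul_of_nonneg_left total hε.le
  have t2 := mul_le_mul_of_nonneg_right hεK (add_nonneg (sq_nonneg X) (sq_nonneg Y))
  linarith

/-- The determinant of the Hessian of `hPert ε` at `(x, y)`, multiplied by
`x (1 - x) y (1 - y)`, as a function of `(ε, x, y)`. -/
def pertDen (w : ℝ × ℝ × ℝ) : ℝ :=
  (1 - 2 * w.1 * (w.2.1 * (1 - w.2.1) * (w.2.2 * (1 - w.2.2)))) ^ 2 -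
    w.1 ^ 2 * (w.2.1 * (1 - w.2.1) * (w.2.2 * (1 - w.2.2))) *
      ((1 - 2 * w.2.1) ^ 2 * (1 - 2 * w.2.2) ^ 2)

/-- The second order correction in `ε` to the diagonal of the mobility. -/
def diagCorr (w : ℝ × ℝ × ℝ) : ℝ :=
  w.2.2 * (1 - w.2.2) *
    (4 * (w.2.1 * (1 - w.2.1) * (w.2.2 * (1 - w.2.2))) +
      (1 - 2 * w.2.1) ^ 2 * (1 - 2 * w.2.2) ^ 2 -
      8 * w.1 * (w.2.1 * (1 - w.2.1) * (w.2.2 * (1 - w.2.2))) ^ 2 +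
      2 * w.1 * (w.2.1 * (1 - w.2.1) * (w.2.2 * (1 - w.2.2))) *
        ((1 - 2 * w.2.1) ^ 2 * (1 - 2 * w.2.2) ^ 2)) / pertDen w

/-- The first order correction in `ε` to the off-diagonal of the mobility. -/
def offCorr (w : ℝ × ℝ × ℝ) : ℝ :=
  -((1 - 2 * w.2.1) * (1 - 2 * w.2.2)) / pertDen w

/-- The diagonal entry of the perturbed mobility. -/
def mobDiag (ε x y : ℝ) : ℝ :=
  x * (1 - x) + 2 * ε * ((x * (1 - x)) ^ 2 * (y * (1 - y))) +
    ε ^ 2 * ((x * (1 - x)) ^ 2 * diagCorr (ε, x, y))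

/-- The off-diagonal entry of the perturbed mobility. -/
def mobOff (ε x y : ℝ) : ℝ :=
  ε * (x * (1 - x) * (y * (1 - y)) * offCorr (ε, x, y))

/-- The perturbed mobility, as an explicit matrix-valued rational function. -/
def pertMob (ε : ℝ) (z : Fin 2 → ℝ) : Matrix (Fin 2) (Fin 2) ℝ :=
  !![mobDiag ε (z 0) (z 1), mobOff ε (z 0) (z 1); mobOff ε (z 0) (z 1), mobDiag ε (z 1) (z 0)]

lemma logistic_mem {x : ℝ} (hx : x ∈ Icc (0 : ℝ) 1) :
    0 ≤ x * (1 - x) ∧ x * (1 - x) ≤ 1 / 4 :=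
  ⟨mul_nonneg hx.1 (by linarith [hx.2]), by nlinarith [sq_nonneg (1 - 2 * x)]⟩

lemma abs_one_sub_two_mul_le {x : ℝ} (hx : x ∈ Icc (0 : ℝ) 1) : |1 - 2 * x| ≤ 1 :=
  abs_le.2 ⟨by linarith [hx.2], by linarith [hx.1]⟩

/-- The compact parameter set on which the corrections are controlled. -/
def paramBox : Set (ℝ × ℝ × ℝ) := Icc 0 (1 / 10) ×ˢ (Icc 0 1 ×ˢ Icc 0 1)

lemma isCompact_paramBox : IsCompact paramBox :=
  isCompact_Icc.prod (isCompact_Icc.prod isCompact_Icc)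

lemma mul_logistic_mem {x y : ℝ} (hx : x ∈ Icc (0 : ℝ) 1) (hy : y ∈ Icc (0 : ℝ) 1) :
    0 ≤ x * (1 - x) * (y * (1 - y)) ∧ x * (1 - x) * (y * (1 - y)) ≤ 1 / 16 := by
  obtain ⟨hp0, hp1⟩ := logistic_mem hx
  obtain ⟨hq0, hq1⟩ := logistic_mem hy
  exact ⟨mul_nonneg hp0 hq0, by nlinarith⟩

lemma pertDen_pos {w : ℝ × ℝ × ℝ} (hw : w ∈ paramBox) : 0 < pertDen w := by
  obtain ⟨⟨hε0, hε1⟩, hx, hy⟩ := hw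
  obtain ⟨hr0, hr1⟩ := mul_logistic_mem hx hy
  have ha : (1 - 2 * w.2.1) ^ 2 ≤ 1 := by
    simpa using sq_le_one_iff_abs_le_one _ |>.2 (abs_one_sub_two_mul_le hx)
  have hb : (1 - 2 * w.2.2) ^ 2 ≤ 1 := by
    simpa using sq_le_one_iff_abs_le_one _ |>.2 (abs_one_sub_two_mul_le hy)
  have hab := mul_le_one₀ ha (sq_nonneg _) hb
  have hab0 := mul_nonneg (sq_nonneg (1 - 2 * w.2.1)) (sq_nonneg (1 - 2 * w.2.2))
  unfold pertDen
  generalize w.2.1 * (1 - w.2.1) * (w.2.2 * (1 - w.2.2)) = r at *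
  generalize (1 - 2 * w.2.1) ^ 2 * (1 - 2 * w.2.2) ^ 2 = s at *
  have h1 : w.1 * r ≤ 1 / 160 := by nlinarith
  have h2 : w.1 ^ 2 * r ≤ 1 / 1600 := by nlinarith [mul_nonneg hε0 hr0]
  have h3 : w.1 ^ 2 * r * s ≤ 1 / 1600 := by
    nlinarith [mul_nonneg (mul_nonneg (sq_nonneg w.1) hr0) (sub_nonneg.2 hab)]
  nlinarith [mul_nonneg hε0 hr0]

lemma pertDen_swap (ε x y : ℝ) : pertDen (ε, y, x) = pertDen (ε, x, y) := by
  simp only [pertDen]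
  ring

lemma contDiff_pertDen : ContDiff ℝ (⊤ : ℕ∞) pertDen := by
  unfold pertDen
  fun_prop

lemma contDiffAt_diagCorr {w : ℝ × ℝ × ℝ} (hw : w ∈ paramBox) :
    ContDiffAt ℝ (⊤ : ℕ∞) diagCorr w :=
  ContDiffAt.div (by fun_prop) contDiff_pertDen.contDiffAt (pertDen_pos hw).ne'

lemma contDiffAt_offCorr {w : ℝ × ℝ × ℝ} (hw : w ∈ paramBox) :
    ContDiffAt ℝ (⊤ : ℕ∞) offCorr w :=
  ContDiffAt.div (by fun_prop) contDiff_pertDen.contDiffAt (pertDen_pos hw).ne'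

lemma mobDiag_eq {ε x y : ℝ} (hD : pertDen (ε, x, y) ≠ 0) :
    mobDiag ε x y =
      x * (1 - x) * (1 - 2 * ε * (x * (1 - x) * (y * (1 - y)))) / pertDen (ε, x, y) := by
  rw [eq_div_iff hD]
  simp only [mobDiag, diagCorr]
  have : ∀ A B C N : ℝ, (A + B + C * (N / pertDen (ε, x, y))) * pertDen (ε, x, y) =
      (A + B) * pertDen (ε, x, y) + C * N := fun A B C N => by
    field_simp
  rw [← mul_assoc (ε ^ 2), this]
  simp only [pertDen]
  ring

lemma contDiffAt_pertMob {ε : ℝ} {z : Fin 2 → ℝ} (hε : ε ∈ Icc (0 : ℝ) (1 / 10))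
    (hz : ∀ j, z j ∈ Icc (0 : ℝ) 1) (i j : Fin 2) :
    ContDiffAt ℝ (⊤ : ℕ∞) (fun z => pertMob ε z i j) z := by
  have hw01 : ((ε, z 0, z 1) : ℝ × ℝ × ℝ) ∈ paramBox := ⟨hε, hz 0, hz 1⟩
  have hw10 : ((ε, z 1, z 0) : ℝ × ℝ × ℝ) ∈ paramBox := ⟨hε, hz 1, hz 0⟩
  have h1 : ContDiffAt ℝ (⊤ : ℕ∞) (fun z : Fin 2 → ℝ => diagCorr (ε, z 0, z 1)) z :=
    ContDiffAt.comp z (contDiffAt_diagCorr hw01)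
      (f := fun z : Fin 2 → ℝ => (ε, z 0, z 1)) (by fun_prop)
  have h2 : ContDiffAt ℝ (⊤ : ℕ∞) (fun z : Fin 2 → ℝ => diagCorr (ε, z 1, z 0)) z :=
    ContDiffAt.comp z (contDiffAt_diagCorr hw10)
      (f := fun z : Fin 2 → ℝ => (ε, z 1, z 0)) (by fun_prop)
  have h3 : ContDiffAt ℝ (⊤ : ℕ∞) (fun z : Fin 2 → ℝ => offCorr (ε, z 0, z 1)) z :=
    ContDiffAt.comp z (contDiffAt_offCorr hw01)
      (f := fun z : Fin 2 → ℝ => (ε, z 0, z 1)) (by fun_prop)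
  fin_cases i <;> fin_cases j <;> simp [pertMob, mobDiag, mobOff] <;> fun_prop

lemma pertMob_of_boundary {ε : ℝ} {z : Fin 2 → ℝ} (hz : z 0 * (1 - z 0) * (z 1 * (1 - z 1)) = 0) :
    pertMob ε z = Matrix.diagonal (fun j => z j * (1 - z j)) := by
  have h0 : mobDiag ε (z 0) (z 1) = z 0 * (1 - z 0) := by
    rcases mul_eq_zero.1 hz with h | h <;> simp only [mobDiag, diagCorr, h] <;> ring
  have h1 : mobDiag ε (z 1) (z 0) = z 1 * (1 - z 1) := by
    rcases mul_eq_zero.1 hz with h | h <;> simp only [mobDiag, diagCorr, h] <;> ring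
  have h2 : mobOff ε (z 0) (z 1) = 0 := by simp [mobOff, hz]
  ext i j
  fin_cases i <;> fin_cases j <;> simp [pertMob, h0, h1, h2]

lemma Matrix.posDef_fin_two {a b d : ℝ} (ha : 0 < a) (hdet : 0 < a * d - b ^ 2) :
    (!![a, b; b, d] : Matrix (Fin 2) (Fin 2) ℝ).PosDef := by
  refine Matrix.PosDef.of_dotProduct_mulVec_pos ?_ fun v hv => ?_
  · ext i j
    fin_cases i <;> fin_cases j <;> rfl
  · have hquad : star v ⬝ᵥ (!![a, b; b, d] : Matrix (Fin 2) (Fin 2) ℝ) *ᵥ v =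
        ((a * v 0 + b * v 1) ^ 2 + (a * d - b ^ 2) * v 1 ^ 2) / a := by
      rw [eq_div_iff ha.ne']
      simp [dotProduct, Matrix.mulVec, Fin.sum_univ_two]
      ring
    rw [hquad]
    refine div_pos ?_ ha
    by_cases h1 : v 1 = 0
    · have h0 : v 0 ≠ 0 := fun h0 => hv (by ext i; fin_cases i <;> simp [h0, h1])
      simp only [h1]
      have := pow_pos (abs_pos.2 (mul_ne_zero ha.ne' h0)) 2
      simpa [mul_pow] using this
    · have := mul_pos hdet (pow_pos (abs_pos.2 h1) 2)
      rw [sq_abs] at this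
      positivity

lemma hasDerivAt_logEntropy {s : ℝ} (hs : s ∈ Ioo (0 : ℝ) 1) :
    HasDerivAt logEntropy (Real.log s - Real.log (1 - s)) s := by
  have h0 : s ≠ 0 := hs.1.ne'
  have h1 : 1 - s ≠ 0 := by linarith [hs.2]
  have h2 : HasDerivAt (fun s : ℝ => 1 - s) (-1) s := by
    simpa using (hasDerivAt_id s).const_sub 1
  refine (((hasDerivAt_id s).mul (Real.hasDerivAt_log h0)).add (h2.mul (h2.log h1))).congr_deriv ?_
  simp
  field_simp
  ring

lemma isOpen_openSquare : IsOpen {z : Fin 2 → ℝ | ∀ j, z j ∈ Ioo (0 : ℝ) 1} := by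
  simp only [ofPred_forall]
  exact isOpen_iInter_of_finite fun j => isOpen_Ioo.preimage (continuous_apply j)

lemma hess_hPert (ε : ℝ) {z : Fin 2 → ℝ} (hz : ∀ j, z j ∈ Ioo (0 : ℝ) 1) :
    hess (hPert ε) z =
      !![1 / (z 0 * (1 - z 0)) - 2 * ε * (z 1 * (1 - z 1)),
          ε * ((1 - 2 * z 0) * (1 - 2 * z 1));
        ε * ((1 - 2 * z 0) * (1 - 2 * z 1)),
          1 / (z 1 * (1 - z 1)) - 2 * ε * (z 0 * (1 - z 0))] := by
  have hproj : ∀ (k : Fin 2) (y : Fin 2 → ℝ), HasFDerivAt (fun y : Fin 2 → ℝ => y k)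
      (ContinuousLinearMap.proj (R := ℝ) (φ := fun _ : Fin 2 => ℝ) k) y :=
    fun k y => hasFDerivAt_apply k y
  have hlogistic : ∀ s : ℝ, HasDerivAt (fun s : ℝ => s * (1 - s)) (1 - 2 * s) s := fun s => by
    refine ((hasDerivAt_id s).mul ((hasDerivAt_id s).const_sub 1)).congr_deriv ?_
    simp
    ring
  have hgrad : ∀ y : Fin 2 → ℝ, (∀ j, y j ∈ Ioo (0 : ℝ) 1) → ∀ v, fderiv ℝ (hPert ε) y v =
      (Real.log (y 0) - Real.log (1 - y 0) + ε * ((1 - 2 * y 0) * (y 1 * (1 - y 1)))) * v 0 +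
      (Real.log (y 1) - Real.log (1 - y 1) + ε * ((1 - 2 * y 1) * (y 0 * (1 - y 0)))) * v 1 := by
    intro y hy v
    have hL := fun k => (hasDerivAt_logEntropy (hy k)).comp_hasFDerivAt y (hproj k y)
    have hP := fun k => (hlogistic (y k)).comp_hasFDerivAt y (hproj k y)
    have h := ((hL 0).add (hL 1)).add (((hP 0).mul (hP 1)).const_mul ε)
    have hfun : hPert ε = (logEntropy ∘ (fun y : Fin 2 → ℝ => y 0) +
        logEntropy ∘ fun y : Fin 2 → ℝ => y 1) + fun y => ε *
        (((fun s : ℝ => s * (1 - s)) ∘ fun y : Fin 2 → ℝ => y 0) *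
          ((fun s : ℝ => s * (1 - s)) ∘ fun y : Fin 2 → ℝ => y 1)) y := by
      funext y
      simp only [hPert, Pi.add_apply, Pi.mul_apply, Function.comp_apply]
      ring
    rw [hfun]
    refine (congrArg (fun L => L v) h.fderiv).trans ?_
    simp
    ring
  have hlogit : ∀ s ∈ Ioo (0 : ℝ) 1,
      HasDerivAt (fun s => Real.log s - Real.log (1 - s)) (1 / (s * (1 - s))) s := by
    intro s hs
    have h0 : s ≠ 0 := hs.1.ne'
    have h1 : 1 - s ≠ 0 := by linarith [hs.2]
    refine ((Real.hasDerivAt_log h0).sub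
      (((hasDerivAt_id s).const_sub 1).log h1)).congr_deriv ?_
    simp
    field_simp
    ring
  have haff : ∀ s : ℝ, HasDerivAt (fun s : ℝ => 1 - 2 * s) (-2) s := fun s => by
    simpa using ((hasDerivAt_id s).const_mul 2).const_sub 1
  have hsecond : ∀ (k l : Fin 2) (v : Fin 2 → ℝ), fderiv ℝ (fun y : Fin 2 → ℝ =>
      Real.log (y k) - Real.log (1 - y k) + ε * ((1 - 2 * y k) * (y l * (1 - y l)))) z v =
      (1 / (z k * (1 - z k)) - 2 * ε * (z l * (1 - z l))) * v k +
        ε * ((1 - 2 * z k) * (1 - 2 * z l)) * v l := by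
    intro k l v
    have h := ((hlogit _ (hz k)).comp_hasFDerivAt z (hproj k z)).add
      ((((haff (z k)).comp_hasFDerivAt z (hproj k z)).mul
        ((hlogistic (z l)).comp_hasFDerivAt z (hproj l z))).const_mul ε)
    refine (congrArg (fun L => L v) h.fderiv).trans ?_
    simp
    ring
  have hev : ∀ᶠ y in 𝓝 z, ∀ j, y j ∈ Ioo (0 : ℝ) 1 := isOpen_openSquare.mem_nhds hz
  have h0 : (fun y => fderiv ℝ (hPert ε) y (Pi.single 0 1)) =ᶠ[𝓝 z] fun y =>
      Real.log (y 0) - Real.log (1 - y 0) + ε * ((1 - 2 * y 0) * (y 1 * (1 - y 1))) := by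
    filter_upwards [hev] with y hy
    simp [hgrad y hy]
  have h1 : (fun y => fderiv ℝ (hPert ε) y (Pi.single 1 1)) =ᶠ[𝓝 z] fun y =>
      Real.log (y 1) - Real.log (1 - y 1) + ε * ((1 - 2 * y 1) * (y 0 * (1 - y 0))) := by
    filter_upwards [hev] with y hy
    simp [hgrad y hy]
  ext i j
  fin_cases j
  · simp only [hess, Matrix.of_apply, Fin.zero_eta, h0.fderiv_eq, hsecond]
    fin_cases i <;> simp
  · simp only [hess, Matrix.of_apply, Fin.mk_one, h1.fderiv_eq, hsecond]
    fin_cases i <;> simp [mul_comm (1 - 2 * z 1)]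

lemma hess_hPert_posDef {ε : ℝ} (hε : ε ∈ Icc (0 : ℝ) (1 / 10)) {z : Fin 2 → ℝ}
    (hz : ∀ j, z j ∈ Ioo (0 : ℝ) 1) : (hess (hPert ε) z).PosDef := by
  have hzc : ∀ j, z j ∈ Icc (0 : ℝ) 1 := fun j => Ioo_subset_Icc_self (hz j)
  have hD := pertDen_pos (w := (ε, z 0, z 1)) ⟨hε, hzc 0, hzc 1⟩
  have hp : 0 < z 0 * (1 - z 0) := mul_pos (hz 0).1 (by linarith [(hz 0).2])
  have hq : 0 < z 1 * (1 - z 1) := mul_pos (hz 1).1 (by linarith [(hz 1).2])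
  rw [hess_hPert ε hz]
  apply Matrix.posDef_fin_two
  · have h1 := (mul_logistic_mem (hzc 0) (hzc 1)).2
    have h2 : 2 * ε * (z 1 * (1 - z 1)) < 1 / (z 0 * (1 - z 0)) := by
      rw [lt_div_iff₀ hp]
      nlinarith [hε.1, hε.2]
    linarith
  · have heq : (1 / (z 0 * (1 - z 0)) - 2 * ε * (z 1 * (1 - z 1))) *
        (1 / (z 1 * (1 - z 1)) - 2 * ε * (z 0 * (1 - z 0))) -
        (ε * ((1 - 2 * z 0) * (1 - 2 * z 1))) ^ 2 =
        pertDen (ε, z 0, z 1) / (z 0 * (1 - z 0) * (z 1 * (1 - z 1))) := by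
      rw [eq_div_iff (mul_pos hp hq).ne']
      simp only [pertDen]
      generalize 1 - 2 * z 0 = a
      generalize 1 - 2 * z 1 = b
      generalize z 0 * (1 - z 0) = p at *
      generalize z 1 * (1 - z 1) = q at *
      field_simp
    rw [heq]
    exact div_pos hD (mul_pos hp hq)

lemma pertMob_eq_inv {ε : ℝ} (hε : ε ∈ Icc (0 : ℝ) (1 / 10)) {z : Fin 2 → ℝ}
    (hz : ∀ j, z j ∈ Ioo (0 : ℝ) 1) : pertMob ε z = (hess (hPert ε) z)⁻¹ := by
  have hzc : ∀ j, z j ∈ Icc (0 : ℝ) 1 := fun j => Ioo_subset_Icc_self (hz j)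
  have hD := pertDen_pos (w := (ε, z 0, z 1)) ⟨hε, hzc 0, hzc 1⟩
  have hp : 0 < z 0 * (1 - z 0) := mul_pos (hz 0).1 (by linarith [(hz 0).2])
  have hq : 0 < z 1 * (1 - z 1) := mul_pos (hz 1).1 (by linarith [(hz 1).2])
  symm
  apply Matrix.inv_eq_left_inv
  have hD' : pertDen (ε, z 1, z 0) ≠ 0 := by
    rw [pertDen_swap]
    exact hD.ne'
  have hDdef : pertDen (ε, z 0, z 1) =
      (1 - 2 * ε * (z 0 * (1 - z 0) * (z 1 * (1 - z 1)))) ^ 2 -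
        ε ^ 2 * (z 0 * (1 - z 0) * (z 1 * (1 - z 1))) *
          ((1 - 2 * z 0) ^ 2 * (1 - 2 * z 1) ^ 2) := rfl
  rw [hess_hPert ε hz, pertMob, mobDiag_eq hD.ne', mobDiag_eq hD', pertDen_swap ε (z 0) (z 1),
    mobOff, offCorr]
  simp only
  generalize pertDen (ε, z 0, z 1) = D at *
  generalize 1 - 2 * z 0 = a at *
  generalize 1 - 2 * z 1 = b at *
  generalize z 0 * (1 - z 0) = p at *
  generalize z 1 * (1 - z 1) = q at *
  have hD0 := hD.ne'
  ext i j
  fin_cases i <;> fin_cases j <;> simp [Matrix.mul_apply, Fin.sum_univ_two] <;> field_simp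
  · rw [hDdef]
    ring
  · ring
  · ring
  · rw [hDdef]
    ring

lemma abs_mul_le_of_abs_le_one {u g C : ℝ} (hu : |u| ≤ 1) (hg : |g| ≤ C) : |u * g| ≤ C := by
  rw [abs_mul]
  exact (mul_le_of_le_one_left (abs_nonneg g) hu).trans hg

lemma exists_mobDiag_jet : ∃ K : ℝ, ∀ ε x y : ℝ, (ε, x, y) ∈ paramBox →
    ∃ c₁ c₂ c₃ : ℝ, |c₁| ≤ K ∧ |c₂| ≤ K ∧ |c₃| ≤ K ∧ ∀ v₁ v₂ : ℝ, ∃ A B : ℝ,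
      HasJet (fun t => mobDiag ε (x + t * v₁) (y + t * v₂)) A B
        (-2 * v₁ ^ 2 - 4 * ε * (x * (1 - x) * v₂) ^ 2 +
          ε * (c₁ * v₁ ^ 2 + c₂ * (v₁ * (x * (1 - x) * v₂)) +
            ε * (c₃ * (x * (1 - x) * v₂) ^ 2))) := by
  obtain ⟨C, hC⟩ := exists_jet_bound isCompact_paramBox
    (fun w hw => (contDiffAt_diagCorr hw).of_le (WithTop.coe_le_coe.2 (le_top : (2 : ℕ∞) ≤ ⊤)))
  refine ⟨8 + 8 * C, fun ε x y hw => ?_⟩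
  obtain ⟨g₁, g₂, g₁₁, g₁₂, g₂₂, hG, h₁, h₂, h₁₁, h₁₂, h₂₂, hjet⟩ := hC _ hw
  obtain ⟨⟨hε0, hε1⟩, hx, hy⟩ := hw
  simp only at hε0 hε1 hx hy hjet
  obtain ⟨hp0, hp1⟩ := logistic_mem hx
  obtain ⟨hq0, hq1⟩ := logistic_mem hy
  have ha := abs_one_sub_two_mul_le hx
  have hb := abs_one_sub_two_mul_le hy
  have hC0 : 0 ≤ C := (abs_nonneg _).trans h₁
  have hε : |ε| ≤ 1 := abs_le.2 ⟨by linarith, by linarith⟩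
  have hp : |x * (1 - x)| ≤ 1 := abs_le.2 ⟨by linarith, by linarith⟩
  have hq : |y * (1 - y)| ≤ 1 := abs_le.2 ⟨by linarith, by linarith⟩
  have hs : |(1 - 2 * x) ^ 2 - 2 * (x * (1 - x))| ≤ 1 :=
    abs_le.2 ⟨by nlinarith, by nlinarith⟩
  have hlog := HasJet.logistic x
  have hlog' := HasJet.logistic y
  generalize diagCorr (ε, x, y) = G at *
  have hmul := @abs_mul_le_of_abs_le_one
  refine ⟨4 * (((1 - 2 * x) ^ 2 - 2 * (x * (1 - x))) * (y * (1 - y))) +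
      ε * (2 * (((1 - 2 * x) ^ 2 - 2 * (x * (1 - x))) * G) +
        4 * (x * (1 - x) * ((1 - 2 * x) * g₁)) + x * (1 - x) * (x * (1 - x) * g₁₁)),
    8 * ((1 - 2 * x) * (1 - 2 * y)) +
      ε * (4 * ((1 - 2 * x) * g₂) + 2 * (x * (1 - x) * g₁₂)), g₂₂, ?_, ?_, ?_, ?_⟩
  · have k1 := abs_le.1 (hmul hs hq)
    have k2 := abs_le.1 (hmul hε (hmul hs hG))
    have k3 := abs_le.1 (hmul hε (hmul hp (hmul ha h₁)))
    have k4 := abs_le.1 (hmul hε (hmul hp (hmul hp h₁₁)))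
    exact abs_le.2 ⟨by linarith, by linarith⟩
  · have k1 := abs_le.1 (hmul ha hb)
    have k2 := abs_le.1 (hmul hε (hmul ha h₂))
    have k3 := abs_le.1 (hmul hε (hmul hp h₁₂))
    exact abs_le.2 ⟨by linarith, by linarith⟩
  · linarith
  · intro v₁ v₂
    have hP2 := (hlog v₁).mul (hlog v₁)
    refine ⟨_, _, (((hlog v₁).add ((HasJet.const (2 * ε)).mul (hP2.mul (hlog' v₂)))).add
      ((HasJet.const (ε ^ 2)).mul (hP2.mul (hjet v₁ v₂)))).congr (fun t => ?_) rfl rfl ?_⟩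
    · simp only [mobDiag]
      ring
    · ring

lemma exists_mobOff_jet : ∃ K : ℝ, ∀ ε x y : ℝ, (ε, x, y) ∈ paramBox →
    ∃ c₁ c₂ c₃ : ℝ, |2 * c₁| ≤ K ∧ |2 * c₂| ≤ K ∧ |2 * c₃| ≤ K ∧ ∀ v₁ v₂ : ℝ, ∃ A B : ℝ,
      HasJet (fun t => mobOff ε (x + t * v₁) (y + t * v₂)) A B
        (ε * (c₁ * (y * (1 - y) * v₁ ^ 2) + c₂ * (v₁ * v₂) + c₃ * (x * (1 - x) * v₂ ^ 2))) := by
  obtain ⟨C, hC⟩ := exists_jet_bound isCompact_paramBox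
    (fun w hw => (contDiffAt_offCorr hw).of_le (WithTop.coe_le_coe.2 (le_top : (2 : ℕ∞) ≤ ⊤)))
  refine ⟨16 * C, fun ε x y hw => ?_⟩
  obtain ⟨g₁, g₂, g₁₁, g₁₂, g₂₂, hG, h₁, h₂, h₁₁, h₁₂, h₂₂, hjet⟩ := hC _ hw
  obtain ⟨-, hx, hy⟩ := hw
  simp only at hx hy hjet
  obtain ⟨hp0, hp1⟩ := logistic_mem hx
  obtain ⟨hq0, hq1⟩ := logistic_mem hy
  have ha := abs_one_sub_two_mul_le hx
  have hb := abs_one_sub_two_mul_le hy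
  have hC0 : 0 ≤ C := (abs_nonneg _).trans h₁
  have hp : |x * (1 - x)| ≤ 1 := abs_le.2 ⟨by linarith, by linarith⟩
  have hq : |y * (1 - y)| ≤ 1 := abs_le.2 ⟨by linarith, by linarith⟩
  generalize offCorr (ε, x, y) = G at *
  have hmul := @abs_mul_le_of_abs_le_one
  have kG := abs_le.1 hG
  refine ⟨-2 * G + 2 * ((1 - 2 * x) * g₁) + x * (1 - x) * g₁₁,
    2 * ((1 - 2 * x) * ((1 - 2 * y) * G)) + 2 * (y * (1 - y) * ((1 - 2 * x) * g₂)) +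
      2 * (x * (1 - x) * ((1 - 2 * y) * g₁)) + 2 * (x * (1 - x) * (y * (1 - y) * g₁₂)),
    -2 * G + 2 * ((1 - 2 * y) * g₂) + y * (1 - y) * g₂₂, ?_, ?_, ?_, ?_⟩
  · have k1 := abs_le.1 (hmul ha h₁)
    have k2 := abs_le.1 (hmul hp h₁₁)
    exact abs_le.2 ⟨by linarith, by linarith⟩
  · have k1 := abs_le.1 (hmul ha (hmul hb hG))
    have k2 := abs_le.1 (hmul hq (hmul ha h₂))
    have k3 := abs_le.1 (hmul hp (hmul hb h₁))
    have k4 := abs_le.1 (hmul hp (hmul hq h₁₂))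
    exact abs_le.2 ⟨by linarith, by linarith⟩
  · have k1 := abs_le.1 (hmul hb h₂)
    have k2 := abs_le.1 (hmul hq h₂₂)
    exact abs_le.2 ⟨by linarith, by linarith⟩
  · intro v₁ v₂
    refine ⟨_, _, ((HasJet.const ε).mul (((HasJet.logistic x v₁).mul (HasJet.logistic y v₂)).mul
      (hjet v₁ v₂))).congr (fun t => rfl) rfl rfl ?_⟩
    ring

/-- The strengthened concavity condition, for all sufficiently small `ε`. -/
lemma exists_pertMob_concave : ∃ ε₀ : ℝ, 0 < ε₀ ∧ ε₀ ≤ 1 / 10 ∧ ∀ ε : ℝ, 0 < ε → ε ≤ ε₀ →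
    ∀ z : Fin 2 → ℝ, (∀ j, z j ∈ Ioo (0 : ℝ) 1) → ∀ ζ : Fin 2 → ℝ,
      (matDirDeriv2 (pertMob ε) z ζ ζ).IsSymm ∧
      ∀ β : Fin 2 → ℝ, ζ ≠ 0 → β ≠ 0 →
        β ⬝ᵥ (matDirDeriv2 (pertMob ε) z ζ ζ *ᵥ β) < 0 := by
  obtain ⟨K₁, hK₁⟩ := exists_mobDiag_jet
  obtain ⟨K₂, hK₂⟩ := exists_mobOff_jet
  set K := max 0 (max K₁ K₂)
  have hK : 0 ≤ K := le_max_left _ _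
  have hK1 : K₁ ≤ K := (le_max_left _ _).trans (le_max_right _ _)
  have hK2 : K₂ ≤ K := (le_max_right _ _).trans (le_max_right _ _)
  have hden : 0 < 1 + 2 * K + K ^ 2 := by positivity
  refine ⟨min (1 / 10) (1 / (1 + 2 * K + K ^ 2)), by positivity, min_le_left _ _,
    fun ε hε hε₀ z hz ζ => ?_⟩
  have hε1 : ε ≤ 1 / 10 := hε₀.trans (min_le_left _ _)
  have hεK : ε * (1 + 2 * K + K ^ 2) ≤ 1 :=
    (le_div_iff₀ hden).1 (hε₀.trans (min_le_right _ _))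
  have hzc : ∀ j, z j ∈ Icc (0 : ℝ) 1 := fun j => Ioo_subset_Icc_self (hz j)
  have hp : 0 < z 0 * (1 - z 0) := mul_pos (hz 0).1 (by linarith [(hz 0).2])
  have hq : 0 < z 1 * (1 - z 1) := mul_pos (hz 1).1 (by linarith [(hz 1).2])
  obtain ⟨c₁, c₂, c₃, h₁, h₂, h₃, hj₁⟩ := hK₁ ε (z 0) (z 1) ⟨⟨hε.le, hε1⟩, hzc 0, hzc 1⟩
  obtain ⟨c₄, c₅, c₆, h₄, h₅, h₆, hj₂⟩ := hK₁ ε (z 1) (z 0) ⟨⟨hε.le, hε1⟩, hzc 1, hzc 0⟩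
  obtain ⟨c₇, c₈, c₉, h₇, h₈, h₉, hj₃⟩ := hK₂ ε (z 0) (z 1) ⟨⟨hε.le, hε1⟩, hzc 0, hzc 1⟩
  obtain ⟨_, _, hj₁⟩ := hj₁ (ζ 0) (ζ 1)
  obtain ⟨_, _, hj₂⟩ := hj₂ (ζ 1) (ζ 0)
  obtain ⟨_, _, hj₃⟩ := hj₃ (ζ 0) (ζ 1)
  have e00 := matDirDeriv2_eq_of_hasJet (M := pertMob ε) (i := 0) (j := 0) hj₁
  have e11 := matDirDeriv2_eq_of_hasJet (M := pertMob ε) (i := 1) (j := 1) hj₂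
  have e01 := matDirDeriv2_eq_of_hasJet (M := pertMob ε) (i := 0) (j := 1) hj₃
  have e10 := matDirDeriv2_eq_of_hasJet (M := pertMob ε) (i := 1) (j := 0) hj₃
  refine ⟨?_, fun β hζ hβ => ?_⟩
  · ext i j
    fin_cases i <;> fin_cases j <;> simp [e01, e10]
  have hne : ¬ (ζ 0 * β 0 = 0 ∧ ζ 1 * β 1 = 0 ∧ z 0 * (1 - z 0) * (ζ 1 * β 0) = 0 ∧
      z 1 * (1 - z 1) * (ζ 0 * β 1) = 0) := by
    rintro ⟨h00, h11, h10, h01⟩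
    replace h10 := (mul_eq_zero.1 h10).resolve_left hp.ne'
    replace h01 := (mul_eq_zero.1 h01).resolve_left hq.ne'
    obtain ⟨i, hi⟩ := Function.ne_iff.1 hβ
    refine hζ (funext fun k => ?_)
    have : ζ k * β i = 0 := by fin_cases k <;> fin_cases i <;> assumption
    exact (mul_eq_zero.1 this).resolve_right hi
  have key := quadForm_neg_of_small hε hεK (h₁.trans hK1) (h₂.trans hK1) (h₃.trans hK1)
    (h₄.trans hK1) (h₅.trans hK1) (h₆.trans hK1) (h₇.trans hK2) (h₈.trans hK2) (h₉.trans hK2) hne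
  refine lt_of_eq_of_lt ?_ key
  simp only [dotProduct, Matrix.mulVec, Fin.sum_univ_two, e00, e01, e10, e11]
  ring

lemma interior_closedSquare : interior {z : Fin 2 → ℝ | ∀ j, z j ∈ Icc (0 : ℝ) 1} =
    {z : Fin 2 → ℝ | ∀ j, z j ∈ Ioo (0 : ℝ) 1} := by
  have h := interior_pi_set (finite_univ (α := Fin 2)) (s := fun _ => Icc (0 : ℝ) 1)
  have hpi : ∀ s : Set ℝ, {z : Fin 2 → ℝ | ∀ j, z j ∈ s} = univ.pi fun _ => s := fun s => by
    ext z
    exact mem_univ_pi.symm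
  rw [hpi, hpi, h, interior_Icc]

lemma isClosed_closedSquare : IsClosed {z : Fin 2 → ℝ | ∀ j, z j ∈ Icc (0 : ℝ) 1} := by
  simp only [ofPred_forall]
  exact isClosed_iInter fun j => isClosed_Icc.preimage (continuous_apply j)

lemma mul_logistic_eq_zero_of_not_mem_Ioo {z : Fin 2 → ℝ} (hz : ∀ j, z j ∈ Icc (0 : ℝ) 1)
    (hn : ¬ ∀ j, z j ∈ Ioo (0 : ℝ) 1) : z 0 * (1 - z 0) * (z 1 * (1 - z 1)) = 0 := by
  by_contra hne
  refine hn fun j => ?_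
  simp only [mul_eq_zero, not_or] at hne
  have h : z j ≠ 0 ∧ 1 - z j ≠ 0 := by
    fin_cases j
    exacts [hne.1, hne.2]
  exact ⟨(hz j).1.lt_of_ne' h.1, (hz j).2.lt_of_ne fun h1 => h.2 (by linarith)⟩

/-- A normal vector to the square has vanishing `j`-th coordinate where `0 < z j < 1`. -/
lemma mul_normal_eq_zero {z ν : Fin 2 → ℝ} (hz : ∀ j, z j ∈ Icc (0 : ℝ) 1)
    (hν : ∀ y ∈ {z : Fin 2 → ℝ | ∀ j, z j ∈ Icc (0 : ℝ) 1}, ν ⬝ᵥ (y - z) ≤ 0) (j : Fin 2) :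
    z j * (1 - z j) * ν j = 0 := by
  have htest : ∀ s ∈ Icc (0 : ℝ) 1, ν j * (s - z j) ≤ 0 := fun s hs => by
    have h := hν (Function.update z j s) fun k => by
      by_cases hk : k = j
      · subst hk
        simpa using hs
      · simpa [Function.update_of_ne hk] using hz k
    have hsingle : Function.update z j s - z = Pi.single j (s - z j) := by
      ext k
      by_cases hk : k = j
      · subst hk
        simp
      · simp [hk]
    rwa [hsingle, dotProduct_single] at h
  have h0 := htest 0 (by simp)
  have h1 := htest 1 (by simp)
  obtain ⟨hz0, hz1⟩ := hz j
  nlinarith [mul_le_mul_of_nonneg_left h0 (sub_nonneg.2 hz1), mul_le_mul_of_nonneg_left h1 hz0]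

/-- the special perturbation of the decoupled logistic mobility
satisfies (C0)-(C3) and the strengthened concavity condition (C2'). -/
theorem perturbed_decoupled_mobility :
    ∃ ε₀ : ℝ, 0 < ε₀ ∧ ∀ ε : ℝ, 0 < ε → ε ≤ ε₀ →
      -- (i) positive definite Hessian (in particular positive determinant) on (0,1)²
      (∀ z : Fin 2 → ℝ, (∀ j, z j ∈ Set.Ioo (0:ℝ) 1) →
        (hess (hPert ε) z).PosDef ∧ 0 < (hess (hPert ε) z).det) ∧
      -- (ii) the inverse Hessian extends continuously to S = [0,1]²
      --      by the decoupled mobility diag(z_j(1−z_j)) on the boundary,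
      --      and the extension satisfies (C0)-(C3) and (C2')
      ∃ M : (Fin 2 → ℝ) → Matrix (Fin 2) (Fin 2) ℝ,
        (∀ z : Fin 2 → ℝ, (∀ j, z j ∈ Set.Ioo (0:ℝ) 1) → M z = (hess (hPert ε) z)⁻¹) ∧
        (∀ z : Fin 2 → ℝ, (∀ j, z j ∈ Set.Icc (0:ℝ) 1) → ¬ (∀ j, z j ∈ Set.Ioo (0:ℝ) 1) →
          M z = Matrix.diagonal (fun j => z j * (1 - z j))) ∧
        (∀ i j, ContinuousOn (fun z => M z i j) {z : Fin 2 → ℝ | ∀ j, z j ∈ Set.Icc (0:ℝ) 1}) ∧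
        -- (iii) strengthened concavity (C2') on (0,1)²
        (∀ z : Fin 2 → ℝ, (∀ j, z j ∈ Set.Ioo (0:ℝ) 1) →
          ∀ ζ β : Fin 2 → ℝ, ζ ≠ 0 → β ≠ 0 →
            β ⬝ᵥ (matDirDeriv2 M z ζ ζ *ᵥ β) < 0) ∧
        IsMobility {z : Fin 2 → ℝ | ∀ j, z j ∈ Set.Icc (0:ℝ) 1} M ∧
        MobC3 {z : Fin 2 → ℝ | ∀ j, z j ∈ Set.Icc (0:ℝ) 1} M ∧
        (∀ z ∈ interior {z : Fin 2 → ℝ | ∀ j, z j ∈ Set.Icc (0:ℝ) 1},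
          ∀ ζ : Fin 2 → ℝ, ζ ≠ 0 → (-(matDirDeriv2 M z ζ ζ)).PosDef) := by
  obtain ⟨ε₀, hε₀, hε₀', hconc⟩ := exists_pertMob_concave
  refine ⟨ε₀, hε₀, fun ε hε hle => ?_⟩
  have hε' : ε ∈ Icc (0 : ℝ) (1 / 10) := ⟨hε.le, hle.trans hε₀'⟩
  have hneg : ∀ z : Fin 2 → ℝ, (∀ j, z j ∈ Ioo (0 : ℝ) 1) → ∀ ζ : Fin 2 → ℝ, ζ ≠ 0 →
      (-(matDirDeriv2 (pertMob ε) z ζ ζ)).PosDef := fun z hz ζ hζ => by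
    obtain ⟨hsymm, hlt⟩ := hconc ε hε hle z hz ζ
    refine Matrix.PosDef.of_dotProduct_mulVec_pos ?_ fun β hβ => ?_
    · rw [Matrix.IsHermitian, Matrix.conjTranspose_eq_transpose_of_trivial]
      exact hsymm.neg
    · rw [star_trivial, Matrix.neg_mulVec, dotProduct_neg]
      exact neg_pos.2 (hlt β hζ hβ)
  have hcont : ∀ i j, ContinuousOn (fun z => pertMob ε z i j)
      {z : Fin 2 → ℝ | ∀ j, z j ∈ Icc (0 : ℝ) 1} := fun i j z hz =>
    (contDiffAt_pertMob hε' hz i j).continuousAt.continuousWithinAt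
  have hboundary : ∀ z : Fin 2 → ℝ, (∀ j, z j ∈ Icc (0 : ℝ) 1) →
      ¬ (∀ j, z j ∈ Ioo (0 : ℝ) 1) → pertMob ε z = Matrix.diagonal fun j => z j * (1 - z j) :=
    fun z hz hn => pertMob_of_boundary (mul_logistic_eq_zero_of_not_mem_Ioo hz hn)
  refine ⟨fun z hz => ⟨hess_hPert_posDef hε' hz, (hess_hPert_posDef hε' hz).det_pos⟩, pertMob ε,
    fun z hz => pertMob_eq_inv hε' hz, hboundary, hcont,
    fun z hz ζ β hζ hβ => (hconc ε hε hle z hz ζ).2 β hζ hβ, ?_, ?_, ?_⟩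
  · refine ⟨hcont, fun i j z hz => ?_, fun z _ => ?_, fun z hz => ?_, fun z hz ζ => ?_⟩
    · exact (contDiffAt_pertMob hε' (interior_subset hz) i j).contDiffWithinAt
    · ext i j
      fin_cases i <;> fin_cases j <;> simp [pertMob]
    · rw [interior_closedSquare] at hz
      rw [pertMob_eq_inv hε' hz]
      exact (hess_hPert_posDef hε' hz).inv
    · rw [interior_closedSquare] at hz
      rcases eq_or_ne ζ 0 with rfl | hζ
      · have : matDirDeriv2 (pertMob ε) z 0 0 = 0 := by
          ext i j
          simp [matDirDeriv2]
        rw [this, neg_zero]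
        exact Matrix.PosSemidef.zero
      · exact (hneg z hz ζ hζ).posSemidef
  · intro z hz ν hν
    rw [isClosed_closedSquare.frontier_eq, interior_closedSquare] at hz
    rw [hboundary z hz.1 hz.2]
    ext j
    rw [Matrix.mulVec_diagonal]
    exact mul_normal_eq_zero hz.1 hν j
  · intro z hz ζ hζ
    rw [interior_closedSquare] at hz
    exact hneg z hz ζ hζ

end
end
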